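/- (Inequality (1.21)) Let d ≥ 3 and λ > 0. There is a constant c depending only on d such that for all N ≥ 2, all u > 0 with uN^{d−1} ≥ 1, all j ∈ ℤ and every nonempty A ⊆ C_j: E[exp(λ Σ_{x∈A} 1{H_x < D^j_{uN^{d−1}}})] ≤ exp(c u |A| (‖φ_j‖_∞ − 1)), where φ_j(z) = E_z[exp(λ Σ_{x∈A} 1{H_x < T_{B̃_j}})] and ‖φ_j‖_∞ = sup_{z∈E} φ_j(z). -/

import Mathlib

open MeasureTheory Filter
open scoped ENNReal Classical

namespace DiscCyl

/-- The lattice `ℤ^{d+1}`. -/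
abbrev Lat (d : ℕ) := Fin (d + 1) → ℤ

/-- The discrete cylinder `E = (ℤ/Nℤ)^d × ℤ`. -/
abbrev Cyl (d N : ℕ) := (Fin d → ZMod N) × ℤ

instance (N : ℕ) : MeasurableSpace (ZMod N) := ⊤

instance (N : ℕ) : Countable (ZMod N) := by
  cases N with
  | zero => exact inferInstanceAs (Countable ℤ)
  | succ n => exact inferInstanceAs (Countable (Fin (n + 1)))

/-- The canonical projection `π_E : ℤ^{d+1} → E`. -/
def projE (d N : ℕ) (v : Lat d) : Cyl d N :=
  (fun i => (v i.castSucc : ZMod N), v (Fin.last d))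

/-- The `2(d+1)` unit vectors `±e_i` of `ℤ^{d+1}`. -/
def unitVecs (d : ℕ) : Finset (Lat d) :=
  Finset.image (fun p : Fin (d + 1) × Bool => Pi.single p.1 (if p.2 then (1 : ℤ) else -1))
    Finset.univ

/-- One-step transition probability of simple random walk on the cylinder:
each of the `2(d+1)` unit moves of `ℤ^{d+1}` is taken with probability `1/(2(d+1))`
and projected to `E`. -/
noncomputable def stepProb (d N : ℕ) (x y : Cyl d N) : ℝ≥0∞ :=
  (((unitVecs d).filter fun e => x + projE d N e = y).card : ℝ≥0∞) / (2 * (d + 1))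

/-- `Pl` is the family of laws (indexed by the starting point) of simple random walk
on the cylinder `E = (ℤ/Nℤ)^d × ℤ`. -/
def IsCylRW (d N : ℕ) (Pl : Cyl d N → Measure (ℕ → Cyl d N)) : Prop :=
  (∀ x, IsProbabilityMeasure (Pl x)) ∧
    ∀ (x : Cyl d N) (n : ℕ) (γ : ℕ → Cyl d N),
      Pl x {ω | ∀ i ≤ n, ω i = γ i} =
        (if γ 0 = x then 1 else 0) * ∏ i ∈ Finset.range n, stepProb d N (γ i) (γ (i + 1))

/-- The lattice `ℤ^ν`. -/
abbrev ZLat (ν : ℕ) := Fin ν → ℤ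

/-- Unit vectors of `ℤ^ν`. -/
def zUnitVecs (ν : ℕ) : Set (ZLat ν) :=
  {v | ∃ i, v = Pi.single i 1 ∨ v = Pi.single i (-1)}

/-- One-step transition probability of simple random walk on `ℤ^ν`. -/
noncomputable def zStep (ν : ℕ) (x y : ZLat ν) : ℝ≥0∞ :=
  if y - x ∈ zUnitVecs ν then (2 * ν : ℝ≥0∞)⁻¹ else 0

/-- `Ql` is the family of laws of simple random walk on `ℤ^ν`. -/
def IsLatRW (ν : ℕ) (Ql : ZLat ν → Measure (ℕ → ZLat ν)) : Prop :=
  (∀ x, IsProbabilityMeasure (Ql x)) ∧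
    ∀ (x : ZLat ν) (n : ℕ) (γ : ℕ → ZLat ν),
      Ql x {ω | ∀ i ≤ n, ω i = γ i} =
        (if γ 0 = x then 1 else 0) * ∏ i ∈ Finset.range n, zStep ν (γ i) (γ (i + 1))

/-- `q(ν)`: the return probability to the origin of simple random walk on `ℤ^ν`. -/
noncomputable def retProb (ν : ℕ) (Ql : ZLat ν → Measure (ℕ → ZLat ν)) : ℝ :=
  ((Ql 0) {ω | ∃ n : ℕ, 1 ≤ n ∧ ω n = 0}).toReal

/-- Entrance time `H_U` (with value `⊤` if `U` is never entered). -/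
noncomputable def entT {X : Type*} (U : Set X) (ω : ℕ → X) : ℕ∞ :=
  sInf {t : ℕ∞ | ∃ n : ℕ, ω n ∈ U ∧ t = n}

/-- Exit time `T_U`. -/
noncomputable def exitT {X : Type*} (U : Set X) (ω : ℕ → X) : ℕ∞ :=
  entT Uᶜ ω

/-- `after t f ω = t + f (θ_t ω)`, with value `⊤` when `t = ⊤`. -/
noncomputable def after {X : Type*} (t : ℕ∞) (f : (ℕ → X) → ℕ∞) (ω : ℕ → X) : ℕ∞ :=
  t.recTopCoe ⊤ fun m => (m : ℕ∞) + f fun k => ω (k + m)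

/-- The block `C_j = (ℤ/Nℤ)^d × ([(j-3/4)N, (j+3/4)N] ∩ ℤ)`. -/
def Cblk (d N : ℕ) (j : ℤ) : Set (Cyl d N) :=
  {x | ((j : ℝ) - 3 / 4) * N ≤ (x.2 : ℝ) ∧ (x.2 : ℝ) ≤ ((j : ℝ) + 3 / 4) * N}

/-- The block `B_j = (ℤ/Nℤ)^d × [(j-1)N, (j+1)N]`. -/
def Bblk (d N : ℕ) (j : ℤ) : Set (Cyl d N) :=
  {x | (j - 1) * (N : ℤ) ≤ x.2 ∧ x.2 ≤ (j + 1) * (N : ℤ)}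

/-- The block `B̃_j = (ℤ/Nℤ)^d × [(j-2)N+1, (j+2)N-1]`. -/
def Btl (d N : ℕ) (j : ℤ) : Set (Cyl d N) :=
  {x | (j - 2) * (N : ℤ) + 1 ≤ x.2 ∧ x.2 ≤ (j + 2) * (N : ℤ) - 1}

/-- `D^j_1`: time of the first departure from `B̃_j` after the first return to `B_j`. -/
noncomputable def oneExc (d N : ℕ) (j : ℤ) (ω : ℕ → Cyl d N) : ℕ∞ :=
  after (entT (Bblk d N j) ω) (exitT (Btl d N j)) ω

/-- `D^j_k`: time of the `k`-th departure from `B̃_j` (after successive returns to `B_j`). -/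
noncomputable def DD (d N : ℕ) (j : ℤ) : ℕ → (ℕ → Cyl d N) → ℕ∞
  | 0, _ => 0
  | k + 1, ω => after (DD d N j k ω) (oneExc d N j) ω

/-- The law `P` of the walk with initial distribution uniform on `B_0`. -/
noncomputable def lawP (d N : ℕ) (Pl : Cyl d N → Measure (ℕ → Cyl d N)) :
    Measure (ℕ → Cyl d N) :=
  ((N : ℝ≥0∞) ^ d * (2 * N + 1))⁻¹ •
    Measure.sum fun x : Cyl d N => if x ∈ Bblk d N 0 then Pl x else 0

/-- Nearest-neighbour adjacency on the cylinder. -/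
def adj (d N : ℕ) (x y : Cyl d N) : Prop :=
  x ≠ y ∧ ∃ e ∈ unitVecs d, y = x + projE d N e

/-- `x` and `y` are connected by a nearest-neighbour path inside `S`. -/
def connIn (d N : ℕ) (S : Set (Cyl d N)) (x y : Cyl d N) : Prop :=
  Relation.ReflTransGen (fun a b => a ∈ S ∧ b ∈ S ∧ adj d N a b) x y

/-- `S` is a connected set. -/
def IsConnIn (d N : ℕ) (S : Set (Cyl d N)) : Prop :=
  ∀ x ∈ S, ∀ y ∈ S, connIn d N S x y

/-- The boundary `∂U`. -/
def bdry (d N : ℕ) (U : Set (Cyl d N)) : Set (Cyl d N) :=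
  {x | x ∉ U ∧ ∃ y ∈ U, adj d N x y}

/-- `ℓ^∞`-norm on `ℤ^{d+1}`. -/
def linf {d : ℕ} (v : Lat d) : ℕ := Finset.univ.sup fun i => (v i).natAbs

/-- `ℓ^∞`-distance induced on the cylinder. -/
noncomputable def cylDist (d N : ℕ) (x y : Cyl d N) : ℕ :=
  sInf {r : ℕ | ∃ v : Lat d, projE d N v = y - x ∧ linf v = r}

/-- `S` has `ℓ^∞`-diameter at least `L`. -/
def diamGE (d N : ℕ) (S : Set (Cyl d N)) (L : ℕ) : Prop :=
  ∃ x ∈ S, ∃ y ∈ S, L ≤ cylDist d N x y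

/-- `X_{[0,n]}`: the set of points visited up to time `n`. -/
def ran {X : Type*} (ω : ℕ → X) (n : ℕ) : Set X := {y | ∃ i ≤ n, ω i = y}

/-- The set of points visited up to the (possibly infinite) time `t`. -/
def ranE {X : Type*} (ω : ℕ → X) (t : ℕ∞) : Set X :=
  {y | ∃ i : ℕ, (i : ℕ∞) ≤ t ∧ ω i = y}

/-- `L_m`: projections to `E` of `m`-dimensional affine coordinate lattices of `ℤ^{d+1}`. -/
def Lcoll (d N m : ℕ) : Set (Set (Cyl d N)) :=
  {F | ∃ I : Finset (Fin (d + 1)), I.card = m ∧ ∃ y : Lat d,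
      F = (fun v => projE d N (y + v)) '' {v : Lat d | ∀ i ∉ I, v i = 0}}

/-- `A^j_m`: nonempty subsets of `C_j` contained in some `F ∈ L_m`. -/
def Adm (d N : ℕ) (j : ℤ) (m : ℕ) : Set (Finset (Cyl d N)) :=
  {A | A.Nonempty ∧ ↑A ⊆ Cblk d N j ∧ ∃ F ∈ Lcoll d N m, (↑A : Set (Cyl d N)) ⊆ F}

/-- The segment `{x + k·e : 0 ≤ k ≤ L}` (addition via `π_E`). -/
def segment (d N : ℕ) (x : Cyl d N) (e : Lat d) (L : ℕ) : Set (Cyl d N) :=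
  {y | ∃ k : ℕ, k ≤ L ∧ y = x + projE d N ((k : ℤ) • e)}

/-- The event `V_{K,j,t}` (with `k = ⌊t⌋` excursions). -/
def Vev (d N : ℕ) (K : ℝ) (j : ℤ) (k : ℕ) : Set (ℕ → Cyl d N) :=
  {ω | ∀ x ∈ Cblk d N j, ∀ e ∈ unitVecs d, ∃ i : ℕ, (i : ℝ) < Real.sqrt N ∧
      ∀ l : ℕ, i ≤ l → l ≤ i + ⌊K * Real.log N⌋₊ →
        x + projE d N ((l : ℤ) • e) ∉ ranE ω (DD d N j k ω)}

/-- The event `U_{K,j,t}` (with `k = ⌊t⌋` excursions). -/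
def Uev (d N : ℕ) (K : ℝ) (j : ℤ) (k : ℕ) : Set (ℕ → Cyl d N) :=
  {ω | ∀ F ∈ Lcoll d N 2, ∀ n : ℕ, (n : ℕ∞) ≤ DD d N j k ω →
      ∀ O₁ O₂ : Set (Cyl d N),
        O₁ ⊆ (F ∩ Cblk d N j) \ ran ω n → O₂ ⊆ (F ∩ Cblk d N j) \ ran ω n →
        IsConnIn d N O₁ → IsConnIn d N O₂ →
        diamGE d N O₁ ⌊K * Real.log N⌋₊ → diamGE d N O₂ ⌊K * Real.log N⌋₊ →
        ∀ p ∈ O₁, ∀ q ∈ O₂, connIn d N ((F ∩ Cblk d N j) \ ran ω n) p q}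

/-- A (finite) set `S` disconnects the cylinder. -/
def Disconnects (d N : ℕ) (S : Set (Cyl d N)) : Prop :=
  S.Finite ∧ ∃ M₀ : ℕ, ∀ M : ℕ, M₀ ≤ M → ∀ x y : Cyl d N,
    (M : ℤ) ≤ x.2 → y.2 ≤ -(M : ℤ) → ¬ connIn d N Sᶜ x y

/-- The disconnection time `T_N`. -/
noncomputable def discT (d N : ℕ) (ω : ℕ → Cyl d N) : ℕ∞ :=
  sInf {t : ℕ∞ | ∃ n : ℕ, Disconnects d N (ran ω n) ∧ t = n}

/-- `r ≤ t` for `t : ℕ∞` and a real threshold `r` (trivially true when `t = ⊤`). -/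
def geReal (t : ℕ∞) (r : ℝ) : Prop := ∀ n : ℕ, t = (n : ℕ∞) → r ≤ n

/-- `r < t` for `t : ℕ∞` and a real threshold `r` (trivially true when `t = ⊤`). -/
def gtReal (t : ℕ∞) (r : ℝ) : Prop := ∀ n : ℕ, t = (n : ℕ∞) → r < n

/-- `φ_j(z) = E_z[exp(λ Σ_{x∈A} 1{H_x < T_{B̃_j}})]`. -/
noncomputable def phi (d N : ℕ) (Pl : Cyl d N → Measure (ℕ → Cyl d N)) (j : ℤ) (lam : ℝ)
    (A : Finset (Cyl d N)) (z : Cyl d N) : ℝ :=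
  ∫ ω, Real.exp (lam * ∑ x ∈ A, if entT {x} ω < exitT (Btl d N j) ω then (1 : ℝ) else 0)
    ∂(Pl z)

/-- `‖φ_j‖_∞`. -/
noncomputable def phiSup (d N : ℕ) (Pl : Cyl d N → Measure (ℕ → Cyl d N)) (j : ℤ) (lam : ℝ)
    (A : Finset (Cyl d N)) : ℝ :=
  ⨆ z : Cyl d N, phi d N Pl j lam A z

/-- `q_N = sup {P_z[H_F < T_{B̃_j}] : F ∈ L_m, z ∈ ∂F}`. -/
noncomputable def qNval (d N m : ℕ) (Pl : Cyl d N → Measure (ℕ → Cyl d N)) (j : ℤ) : ℝ :=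
  sSup {r : ℝ | ∃ F ∈ Lcoll d N m, ∃ z ∈ bdry d N F,
      r = ((Pl z) {ω | entT F ω < exitT (Btl d N j) ω}).toReal}

/-- The times `τ_k`: `τ_0` is the entrance time of `(ℤ/Nℤ)^d × Nℤ`, and `τ_{k+1}` is the
first time after `τ_k` at which the vertical component has moved by exactly `N`. -/
noncomputable def tauT (d N : ℕ) : ℕ → (ℕ → Cyl d N) → ℕ∞
  | 0, ω => entT {x : Cyl d N | (N : ℤ) ∣ x.2} ω
  | k + 1, ω =>
      (tauT d N k ω).recTopCoe ⊤ fun m =>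
        sInf {t : ℕ∞ | ∃ n : ℕ, m < n ∧ ((ω n).2 - (ω m).2).natAbs = N ∧ t = n}

/-- `*`-adjacency on `ℤ²`. -/
def starAdj (x y : ℤ × ℤ) : Prop :=
  x ≠ y ∧ (x.1 - y.1).natAbs ≤ 1 ∧ (x.2 - y.2).natAbs ≤ 1

/-!
Mirroring the walk on `ℤ^{d+1}` in a coordinate or diagonal hyperplane shows that its heat kernel
grows as the starting point moves towards the target. Comparing one point with a whole box of such
mirror images, whose total mass on the cylinder is at most `1`, bounds the heat kernel of the
cylinder between points at height distance `r ≤ N` by a multiple of `r ^ (-(d + 1))`, uniformly in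
time. The walk killed on leaving `B̃_j` survives about `N ^ 2` steps, so halving the distance
repeatedly bounds its Green function at distance `r` by a multiple of `N ^ 2 / r ^ (d + 1)`, that
is, by a multiple of `N ^ (1 - d)` between `C_j` and the entrance heights of `B_j`.

By the Markov property at the first visit to `A`, the excess `φ_j(z) - 1` is at most
`(∑ x ∈ A, g(z, x)) * (‖φ_j‖_∞ - 1)`. Hence each excursion that enters `B_j` from outside, and also
the first one on average over the uniform starting point, multiplies the exponential moment by at
most `1 + c * |A| * (‖φ_j‖_∞ - 1) / N ^ (d - 1)`; there are at most `u * N ^ (d - 1)` excursions.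
-/

section Kernel

variable {X : Type*} {K K' : X → X → ℝ≥0∞}

/-- The weights of the `n`-th iterate of the kernel on `X` with weights `K x y`; for a Markov
kernel, the `n`-step transition probabilities. -/
noncomputable def kernelPow (K : X → X → ℝ≥0∞) : ℕ → X → X → ℝ≥0∞
  | 0, x, y => if x = y then 1 else 0
  | n + 1, x, z => ∑' y, K x y * kernelPow K n y z

/-- The kernel of the motion with kernel `K` that dies on leaving `B`. -/
noncomputable def killed (K : X → X → ℝ≥0∞) (B : Set X) (x y : X) : ℝ≥0∞ :=
  if x ∈ B ∧ y ∈ B then K x y else 0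

/-- The Green function: the expected number of visits to `y` of the motion with kernel `K`
started at `x`. -/
noncomputable def green (K : X → X → ℝ≥0∞) (x y : X) : ℝ≥0∞ :=
  ∑' n, kernelPow K n x y

theorem kernelPow_add (m n : ℕ) (x z : X) :
    kernelPow K (m + n) x z = ∑' y, kernelPow K m x y * kernelPow K n y z := by
  induction m generalizing x with
  | zero => simp [kernelPow]
  | succ m ih =>
    simp only [Nat.succ_add, kernelPow, ih, ← ENNReal.tsum_mul_left, ← ENNReal.tsum_mul_right,
      mul_assoc]
    rw [ENNReal.tsum_comm]

theorem kernelPow_one (x y : X) : kernelPow K 1 x y = K x y := by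
  simp [kernelPow]

theorem kernelPow_succ' (n : ℕ) (x z : X) :
    kernelPow K (n + 1) x z = ∑' y, kernelPow K n x y * K y z := by
  simp only [kernelPow_add n 1, kernelPow_one]

theorem kernelPow_comm (hK : ∀ x y, K x y = K y x) (n : ℕ) (x y : X) :
    kernelPow K n x y = kernelPow K n y x := by
  induction n generalizing x y with
  | zero => simp [kernelPow, eq_comm]
  | succ n ih =>
    rw [kernelPow_succ', kernelPow]
    exact tsum_congr fun z => by rw [ih x z, hK z y, mul_comm]

theorem kernelPow_mono (h : ∀ x y, K x y ≤ K' x y) (n : ℕ) (x y : X) :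
    kernelPow K n x y ≤ kernelPow K' n x y := by
  induction n generalizing x with
  | zero => rfl
  | succ n ih => exact ENNReal.tsum_le_tsum fun z => mul_le_mul' (h x z) (ih z)

theorem tsum_kernelPow_succ (n : ℕ) (x : X) :
    ∑' z, kernelPow K (n + 1) x z = ∑' y, K x y * ∑' z, kernelPow K n y z := by
  simp only [kernelPow, ← ENNReal.tsum_mul_left]
  exact ENNReal.tsum_comm

theorem tsum_kernelPow_eq_one (hK : ∀ x, ∑' y, K x y = 1) (n : ℕ) (x : X) :
    ∑' y, kernelPow K n x y = 1 := by
  induction n generalizing x with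
  | zero => simp [kernelPow]
  | succ n ih => simp [tsum_kernelPow_succ, ih, hK]

theorem antitone_tsum_kernelPow (hK : ∀ x, ∑' y, K x y ≤ 1) (x : X) :
    Antitone fun n => ∑' y, kernelPow K n x y := by
  refine antitone_nat_of_succ_le fun n => ?_
  simp only [kernelPow_succ']
  rw [ENNReal.tsum_comm]
  refine ENNReal.tsum_le_tsum fun y => ?_
  rw [ENNReal.tsum_mul_left]
  exact mul_le_of_le_one_right' (hK y)

theorem killed_le (B : Set X) (x y : X) : killed K B x y ≤ K x y := by
  unfold killed
  split_ifs <;> simp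

theorem killed_comm (hK : ∀ x y, K x y = K y x) (B : Set X) (x y : X) :
    killed K B x y = killed K B y x := by
  simp only [killed, and_comm, hK x y]

theorem green_comm (hK : ∀ x y, K x y = K y x) (x y : X) : green K x y = green K y x :=
  tsum_congr fun n => kernelPow_comm hK n x y

theorem green_eq_sum_add (L : ℕ) (x z : X) :
    green K x z = ∑ n ∈ Finset.range L, kernelPow K n x z
      + ∑' y, kernelPow K L x y * green K y z := by
  simp only [green, ← ENNReal.tsum_mul_left]
  rw [ENNReal.tsum_comm, ← ENNReal.summable.sum_add_tsum_nat_add' (k := L)]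
  simp only [add_comm _ L, kernelPow_add L]

theorem tsum_green_le {h : X → ℝ≥0∞} (hh : ∀ x, 1 + ∑' y, K x y * h y ≤ h x) (x : X) :
    ∑' y, green K x y ≤ h x := by
  have hsum : ∀ L x, ∑ n ∈ Finset.range L, ∑' y, kernelPow K n x y ≤ h x := by
    intro L
    induction L with
    | zero => simp
    | succ L ih =>
      intro x
      calc ∑ n ∈ Finset.range (L + 1), ∑' y, kernelPow K n x y
          = 1 + ∑' y, K x y * ∑ n ∈ Finset.range L, ∑' z, kernelPow K n y z := by
            simp only [Finset.sum_range_succ', tsum_kernelPow_succ, Finset.mul_sum]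
            rw [Summable.tsum_finsetSum fun _ _ => ENNReal.summable, add_comm]
            simp [kernelPow]
        _ ≤ 1 + ∑' y, K x y * h y := by gcongr with y; exact ih y
        _ ≤ h x := hh x
  simp only [green]
  rw [ENNReal.tsum_comm]
  exact ENNReal.tsum_le_of_sum_range_le fun L => hsum L x

theorem mul_tsum_kernelPow_le (hK : ∀ x, ∑' y, K x y ≤ 1) (n : ℕ) (x : X) :
    n * ∑' y, kernelPow K n x y ≤ ∑' y, green K x y := by
  simp only [green]
  rw [ENNReal.tsum_comm]
  calc (n : ℝ≥0∞) * ∑' y, kernelPow K n x y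
      = ∑ _i ∈ Finset.range n, ∑' y, kernelPow K n x y := by simp
    _ ≤ ∑ i ∈ Finset.range n, ∑' y, kernelPow K i x y :=
        Finset.sum_le_sum fun i hi =>
          antitone_tsum_kernelPow hK x (Finset.mem_range.1 hi).le
    _ ≤ _ := ENNReal.sum_le_tsum _

end Kernel

section RandomWalk

variable {G H : Type*} [AddCommGroup G] [AddCommGroup H] {S : Finset G}

/-- The kernel of the random walk on `H` whose increments are the images under `φ` of uniform
elements of `S`. -/
noncomputable def stepKernel (S : Finset G) (φ : G →+ H) (x y : H) : ℝ≥0∞ :=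
  (S.card : ℝ≥0∞)⁻¹ * (S.filter fun e => x + φ e = y).card

theorem tsum_stepKernel_mul (S : Finset G) (φ : G →+ H) (x : H) (f : H → ℝ≥0∞) :
    ∑' y, stepKernel S φ x y * f y = (S.card : ℝ≥0∞)⁻¹ * ∑ e ∈ S, f (x + φ e) := by
  simp only [stepKernel, mul_assoc, ENNReal.tsum_mul_left, Finset.card_filter, Nat.cast_sum,
    Finset.sum_mul, Nat.cast_ite, Nat.cast_one, Nat.cast_zero, ite_mul, one_mul, zero_mul]
  rw [Summable.tsum_finsetSum fun _ _ => ENNReal.summable]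
  simp

theorem tsum_stepKernel (hS : S.Nonempty) (φ : G →+ H) (x : H) :
    ∑' y, stepKernel S φ x y = 1 := by
  have h := tsum_stepKernel_mul S φ x fun _ => 1
  simp only [mul_one, Finset.sum_const, nsmul_eq_mul] at h
  rw [h, ENNReal.inv_mul_cancel (by simpa using hS.ne_empty) (by simp)]

theorem stepKernel_comm (hS : ∀ e ∈ S, -e ∈ S) (φ : G →+ H) (x y : H) :
    stepKernel S φ x y = stepKernel S φ y x := by
  have hcard : (S.filter fun e => x + φ e = y).card = (S.filter fun e => y + φ e = x).card := by
    refine Finset.card_nbij' Neg.neg Neg.neg ?_ ?_ (fun e _ => neg_neg e) fun e _ => neg_neg e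
    all_goals
      intro e he
      obtain ⟨heS, he⟩ := Finset.mem_filter.1 he
      exact Finset.mem_filter.2 ⟨hS e heS, by simp [← he]⟩
  simp only [stepKernel, hcard]

theorem kernelPow_stepKernel_succ (φ : G →+ H) (n : ℕ) (x z : H) :
    kernelPow (stepKernel S φ) (n + 1) x z =
      (S.card : ℝ≥0∞)⁻¹ * ∑ e ∈ S, kernelPow (stepKernel S φ) n (x + φ e) z :=
  tsum_stepKernel_mul S φ x _

theorem kernelPow_stepKernel_map (φ : G →+ H) (n : ℕ) (v : G) (y : H) :
    kernelPow (stepKernel S φ) n (φ v) y =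
      ∑' w, if φ w = y then kernelPow (stepKernel S (AddMonoidHom.id G)) n v w else 0 := by
  induction n generalizing v with
  | zero =>
    rw [tsum_eq_single v fun w hw => by simp [kernelPow, hw.symm]]
    simp [kernelPow]
  | succ n ih =>
    simp only [kernelPow_stepKernel_succ, ← map_add, ih, AddMonoidHom.id_apply, ← mul_ite_zero,
      ENNReal.tsum_mul_left]
    rw [← Summable.tsum_finsetSum fun _ _ => ENNReal.summable]
    simp only [Finset.sum_ite_irrel, Finset.sum_const_zero]

-- Reflection principle: mirror the walk started farther away until it meets `f = q`.
theorem kernelPow_reflection_le {f : Module.Dual ℤ G} {α : G} (hf : f α = 2)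
    (hS : ∀ e ∈ S, Module.reflection hf e ∈ S) (hf1 : ∀ e ∈ S, f e ≤ 1) {q : ℤ} {z : G}
    (hz : f z ≤ q) (n : ℕ) {v : G} (hv : f v ≤ q) :
    kernelPow (stepKernel S (AddMonoidHom.id G)) n (v + (q - f v) • α) z ≤
      kernelPow (stepKernel S (AddMonoidHom.id G)) n v z := by
  induction n generalizing v with
  | zero =>
    by_cases h : v + (q - f v) • α = z
    · have hfz : f v + (q - f v) * 2 = f z := by simpa [hf] using congrArg f h
      obtain rfl : q = f v := by linarith
      simp
    · simp [kernelPow, h]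
  | succ n ih =>
    rcases hv.eq_or_lt with rfl | hlt
    · simp
    have hreindex : ∀ F : G → ℝ≥0∞, ∑ e ∈ S, F e = ∑ e ∈ S, F (Module.reflection hf e) := fun F =>
      Finset.sum_nbij' (Module.reflection hf) (Module.reflection hf) hS hS
        (fun e _ => Module.involutive_reflection hf e)
        (fun e _ => Module.involutive_reflection hf e)
        fun e _ => by rw [Module.involutive_reflection hf e]
    simp only [kernelPow_stepKernel_succ, AddMonoidHom.id_apply]
    rw [hreindex]
    gcongr with e he
    have hfe := hf1 e he
    have hmirror : v + (q - f v) • α + Module.reflection hf e = v + e + (q - f (v + e)) • α := by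
      rw [Module.reflection_apply, map_add]
      module
    rw [hmirror]
    exact ih (by rw [map_add]; omega)

theorem kernelPow_le_sub_smul {f : Module.Dual ℤ G} {α : G} (hf : f α = 2)
    (hS : ∀ e ∈ S, Module.reflection hf e ∈ S) (hf1 : ∀ e ∈ S, f e ≤ 1) (n : ℕ) {v z : G} {m : ℤ}
    (hm : 0 ≤ m) (hmv : m ≤ f (v - z)) :
    kernelPow (stepKernel S (AddMonoidHom.id G)) n v z ≤
      kernelPow (stepKernel S (AddMonoidHom.id G)) n (v - m • α) z := by
  rw [map_sub] at hmv
  have hfv : f (v - m • α) = f v - 2 * m := by simp [hf, mul_comm]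
  have h := kernelPow_reflection_le hf hS hf1 (q := f v - m) (z := z) (by linarith) n
    (v := v - m • α) (by linarith)
  have hback : v - m • α + (f v - m - f (v - m • α)) • α = v := by
    rw [hfv]
    module
  rwa [hback] at h

end RandomWalk

section HeatKernel

variable {d N : ℕ}

theorem mem_unitVecs {e : Lat d} : e ∈ unitVecs d ↔ ∃ i, ∃ η : ℤˣ, e = Pi.single i (η : ℤ) := by
  simp only [unitVecs, Finset.mem_image, Finset.mem_univ, true_and, Prod.exists]
  constructor
  · rintro ⟨i, b, rfl⟩
    exact ⟨i, if b then 1 else -1, by cases b <;> simp⟩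
  · rintro ⟨i, η, rfl⟩
    rcases Int.units_eq_one_or η with rfl | rfl
    · exact ⟨i, true, by simp⟩
    · exact ⟨i, false, by simp⟩

theorem neg_mem_unitVecs {e : Lat d} (he : e ∈ unitVecs d) : -e ∈ unitVecs d := by
  obtain ⟨i, η, rfl⟩ := mem_unitVecs.1 he
  exact mem_unitVecs.2 ⟨i, -η, by simp [Pi.single_neg]⟩

theorem sum_unitVecs {M : Type*} [AddCommMonoid M] (f : Lat d → M) :
    ∑ e ∈ unitVecs d, f e = ∑ i, (f (Pi.single i 1) + f (Pi.single i (-1))) := by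
  rw [unitVecs, Finset.sum_image, Fintype.sum_prod_type]
  · simp
  · rintro ⟨i, a⟩ - ⟨k, b⟩ - h
    have hi := congrFun h i
    have hik : i = k := by
      by_contra hne
      cases a <;> simp [Pi.single_eq_of_ne hne] at hi
    subst hik
    cases a <;> cases b <;> simp at hi ⊢

theorem card_unitVecs (d : ℕ) : (unitVecs d).card = 2 * (d + 1) := by
  rw [Finset.card_eq_sum_ones, sum_unitVecs]
  simp [mul_comm]

/-- Simple random walk on `ℤ^{d+1}`. -/
noncomputable abbrev latticeStep (d : ℕ) : Lat d → Lat d → ℝ≥0∞ :=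
  stepKernel (unitVecs d) (AddMonoidHom.id (Lat d))

theorem kernelPow_latticeStep_le_sub_axis (l : Fin (d + 1)) (n : ℕ) {v w : Lat d} {m : ℤ}
    (hm : 0 ≤ m) (hml : m ≤ (v - w) l) :
    kernelPow (latticeStep d) n v w ≤
      kernelPow (latticeStep d) n (v - m • (Pi.single l 2 : Lat d)) w := by
  have hf : (LinearMap.proj l : Module.Dual ℤ (Lat d)) (Pi.single l 2) = 2 := by simp
  refine kernelPow_le_sub_smul hf ?_ ?_ n hm hml
  · intro e he
    obtain ⟨k, η, rfl⟩ := mem_unitVecs.1 he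
    rw [Module.reflection_apply, mem_unitVecs]
    by_cases hkl : k = l
    · subst hkl
      refine ⟨k, -η, ?_⟩
      rw [LinearMap.proj_apply, Pi.single_eq_same, ← Pi.single_smul', ← Pi.single_sub]
      congr 1
      simp
      ring
    · exact ⟨k, η, by simp [Pi.single_eq_of_ne' hkl]⟩
  · intro e he
    obtain ⟨k, η, rfl⟩ := mem_unitVecs.1 he
    rcases Int.units_eq_one_or η with rfl | rfl <;> simp [Pi.single_apply] <;> split_ifs <;> simp

theorem kernelPow_latticeStep_le_sub_diagonal {i l : Fin (d + 1)} (hil : i ≠ l) (ε : ℤˣ) (n : ℕ)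
    {v w : Lat d} {m : ℤ} (hm : 0 ≤ m) (hml : m ≤ (v - w) l) (hi : 0 ≤ ε * (v - w) i) :
    kernelPow (latticeStep d) n v w ≤
      kernelPow (latticeStep d) n (v - m • (Pi.single l 1 + Pi.single i (ε : ℤ) : Lat d)) w := by
  have hε : (ε : ℤ) * ε = 1 := by simp [← Units.val_mul]
  let f : Module.Dual ℤ (Lat d) := LinearMap.proj l + (ε : ℤ) • LinearMap.proj i
  have hf : f (Pi.single l 1 + Pi.single i (ε : ℤ)) = 2 := by
    simp [f, hε, Pi.single_eq_of_ne hil, Pi.single_eq_of_ne' hil]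
  have hfsingle : ∀ k (a : ℤ),
      f (Pi.single k a) = if k = l then a else if k = i then ε * a else 0 := by
    intro k a
    split_ifs with hkl hki
    · subst hkl; simp [f, Pi.single_eq_of_ne hil]
    · subst hki; simp [f, Pi.single_eq_of_ne' hil]
    · simp [f, Pi.single_eq_of_ne' hkl, Pi.single_eq_of_ne' hki]
  refine kernelPow_le_sub_smul hf ?_ ?_ n hm (hml.trans ?_)
  · intro e he
    obtain ⟨k, η, rfl⟩ := mem_unitVecs.1 he
    rw [Module.reflection_apply, hfsingle, mem_unitVecs]
    split_ifs with hkl hki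
    · refine ⟨i, -(η * ε), ?_⟩
      simp [hkl, smul_add, ← Pi.single_smul', ← Pi.single_neg]
    · refine ⟨l, -(ε * η), ?_⟩
      have : (ε : ℤ) * η * ε = η := by rw [mul_right_comm, hε, one_mul]
      simp [hki, smul_add, ← Pi.single_smul', ← Pi.single_neg, this]
    · exact ⟨k, η, by simp⟩
  · intro e he
    obtain ⟨k, η, rfl⟩ := mem_unitVecs.1 he
    have hunit : ∀ η : ℤˣ, (η : ℤ) ≤ 1 := fun η => by
      rcases Int.units_eq_one_or η with rfl | rfl <;> simp
    rw [hfsingle]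
    split_ifs
    · exact hunit η
    · exact hunit (ε * η)
    · exact zero_le_one
  · simpa [f] using hi

/-- The move of a walk on `ℤ^{d+1}` that descends by `2p` and then, for each horizontal coordinate
`i`, by `m i` along the diagonal towards the side `ε i`. -/
def boxShift (ε : Fin d → ℤˣ) (p : ℕ) (m : Fin d → ℕ) : Lat d :=
  (p : ℤ) • Pi.single (Fin.last d) 2 +
    ∑ i, (m i : ℤ) • (Pi.single (Fin.last d) 1 + Pi.single i.castSucc (ε i : ℤ))

theorem kernelPow_latticeStep_le_sub_sum {ε : Fin d → ℤˣ} {v w : Lat d}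
    (hε : ∀ i, 0 ≤ ε i * (v - w) i.castSucc) (n : ℕ) (m : Fin d → ℕ) (s : Finset (Fin d))
    (hs : ∑ i ∈ s, (m i : ℤ) ≤ (v - w) (Fin.last d)) :
    kernelPow (latticeStep d) n v w ≤
      kernelPow (latticeStep d) n (v - ∑ i ∈ s, (m i : ℤ) •
        (Pi.single (Fin.last d) 1 + Pi.single i.castSucc (ε i : ℤ) : Lat d)) w := by
  induction s using Finset.induction_on with
  | empty => simp
  | insert a s ha ih =>
    rw [Finset.sum_insert ha] at hs
    rw [Finset.sum_insert ha, add_comm (_ • _), ← sub_sub]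
    refine (ih (by linarith [Int.natCast_nonneg (m a)])).trans ?_
    refine kernelPow_latticeStep_le_sub_diagonal (Fin.castSucc_lt_last a).ne (ε a) n
      (Int.natCast_nonneg _) ?_ ?_
    · simp [Finset.sum_apply] at hs ⊢
      linarith
    · have hsa : ∀ i ∈ s, a ≠ i := fun i hi h => ha (h ▸ hi)
      have hcoord : (∑ i ∈ s, (m i : ℤ) • (Pi.single (Fin.last d) 1 +
          Pi.single i.castSucc (ε i : ℤ) : Lat d)) a.castSucc = 0 := by
        rw [Finset.sum_apply]
        refine Finset.sum_eq_zero fun i hi => ?_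
        simp [(Fin.castSucc_lt_last a).ne, hsa i hi]
      rw [Pi.sub_apply, Pi.sub_apply, hcoord, sub_zero]
      exact hε a

theorem kernelPow_latticeStep_le_sub_boxShift {ε : Fin d → ℤˣ} {v w : Lat d}
    (hε : ∀ i, 0 ≤ ε i * (v - w) i.castSucc) (n p : ℕ) (m : Fin d → ℕ)
    (hpm : 2 * p + ∑ i, (m i : ℤ) ≤ (v - w) (Fin.last d)) :
    kernelPow (latticeStep d) n v w ≤ kernelPow (latticeStep d) n (v - boxShift ε p m) w := by
  have hm : (0 : ℤ) ≤ ∑ i, (m i : ℤ) := Finset.sum_nonneg fun i _ => Int.natCast_nonneg _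
  refine (kernelPow_latticeStep_le_sub_axis (Fin.last d) n (Int.natCast_nonneg p)
    (by linarith)).trans ?_
  rw [boxShift, ← sub_sub]
  refine kernelPow_latticeStep_le_sub_sum (fun i => ?_) n m Finset.univ ?_
  · simpa [(Fin.castSucc_lt_last i).ne] using hε i
  · simp at hpm ⊢
    linarith

theorem kernelPow_latticeStep_le_sum_boxShift (n p : ℕ) (m : Fin d → ℕ) {v w : Lat d}
    (hpm : 2 * p + ∑ i, (m i : ℤ) ≤ (v - w) (Fin.last d)) :
    kernelPow (latticeStep d) n v w ≤
      ∑ ε, kernelPow (latticeStep d) n (v - boxShift ε p m) w := by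
  choose ε hε using fun i : Fin d => show ∃ η : ℤˣ, 0 ≤ (η : ℤ) * (v - w) i.castSucc by
    rcases le_total 0 ((v - w) i.castSucc) with h | h
    · exact ⟨1, by simpa using h⟩
    · exact ⟨-1, by simpa using h⟩
  exact (kernelPow_latticeStep_le_sub_boxShift hε n p m hpm).trans
    (Finset.single_le_sum (f := fun ε => kernelPow (latticeStep d) n (v - boxShift ε p m) w)
      (fun _ _ => zero_le) (Finset.mem_univ ε))

/-- The projection `π_E` as a group homomorphism. -/
def projHom (d N : ℕ) : Lat d →+ Cyl d N where
  toFun := projE d N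
  map_zero' := by ext <;> simp [projE]
  map_add' v w := by ext <;> simp [projE]

theorem projHom_surjective : Function.Surjective (projHom d N) := by
  rintro ⟨a, h⟩
  choose v hv using fun i => ZMod.intCast_surjective (a i)
  exact ⟨Fin.snoc v h, by ext <;> simp [projHom, projE, hv]⟩

theorem projHom_boxShift (ε : Fin d → ℤˣ) (p : ℕ) (m : Fin d → ℕ) :
    projHom d N (boxShift ε p m) =
      (fun i => ((ε i : ℤ) : ZMod N) * m i, 2 * p + ∑ i, (m i : ℤ)) := by
  ext i
  · simp [projHom, projE, boxShift, Pi.single_apply, mul_comm]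
  · simp [projHom, projE, boxShift, mul_comm]

theorem stepProb_eq_stepKernel : stepProb d N = stepKernel (unitVecs d) (projHom d N) := by
  ext x y
  simp only [stepProb, stepKernel, card_unitVecs, ENNReal.div_eq_inv_mul]
  congr!
  simp

theorem tsum_stepProb (x : Cyl d N) : ∑' y, stepProb d N x y = 1 := by
  rw [stepProb_eq_stepKernel]
  exact tsum_stepKernel (Finset.card_pos.1 (by simp [card_unitVecs])) _ x

theorem stepProb_comm (x y : Cyl d N) : stepProb d N x y = stepProb d N y x := by
  rw [stepProb_eq_stepKernel]
  exact stepKernel_comm (fun _ => neg_mem_unitVecs) _ x y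

theorem kernelPow_stepProb_le_sum_boxShift (n p : ℕ) (m : Fin d → ℕ) (v : Lat d) {y : Cyl d N}
    (hpm : 2 * p + ∑ i, (m i : ℤ) ≤ v (Fin.last d) - y.2) :
    kernelPow (stepProb d N) n (projHom d N v) y ≤
      ∑ ε, kernelPow (stepProb d N) n (projHom d N v - projHom d N (boxShift ε p m)) y := by
  simp only [← map_sub, stepProb_eq_stepKernel, kernelPow_stepKernel_map]
  rw [← Summable.tsum_finsetSum fun _ _ => ENNReal.summable]
  refine ENNReal.tsum_le_tsum fun w => ?_
  split_ifs with hw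
  · subst hw
    exact kernelPow_latticeStep_le_sum_boxShift n p m hpm
  · simp

theorem injective_projHom_sub_boxShift {M : ℕ} (hM : M < N) (ε : Fin d → ℤˣ) (x : Cyl d N) :
    Function.Injective fun b : Fin (M + 1) × (Fin d → Fin (M + 1)) =>
      x - projHom d N (boxShift ε b.1 fun i => b.2 i) := by
  rintro ⟨p, m⟩ ⟨p', m'⟩ h
  simp only [sub_right_inj, projHom_boxShift, Prod.mk.injEq] at h
  have hm : m = m' := by
    funext i
    have hunit : IsUnit (((ε i : ℤ) : ZMod N)) := (ε i).isUnit.map (Int.castRingHom (ZMod N))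
    have hcast := hunit.mul_left_cancel (congrFun h.1 i)
    rw [ZMod.natCast_eq_natCast_iff', Nat.mod_eq_of_lt (by omega), Nat.mod_eq_of_lt (by omega)]
      at hcast
    exact Fin.ext hcast
  subst hm
  exact Prod.ext (Fin.ext (by simpa using h.2)) rfl

theorem tsum_kernelPow_stepProb_left (n : ℕ) (y : Cyl d N) :
    ∑' x, kernelPow (stepProb d N) n x y = 1 := by
  simp only [kernelPow_comm stepProb_comm n _ y, tsum_kernelPow_eq_one tsum_stepProb]

theorem pow_mul_kernelPow_stepProb_le_two_pow {M : ℕ} (hM : M < N) (n : ℕ) {x y : Cyl d N}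
    (hxy : ((d : ℤ) + 2) * M ≤ x.2 - y.2) :
    ((M : ℝ≥0∞) + 1) ^ (d + 1) * kernelPow (stepProb d N) n x y ≤ 2 ^ d := by
  obtain ⟨v, rfl⟩ := projHom_surjective x
  let shifted (ε : Fin d → ℤˣ) (b : Fin (M + 1) × (Fin d → Fin (M + 1))) : Cyl d N :=
    projHom d N v - projHom d N (boxShift ε b.1 fun i => b.2 i)
  have hle : ∀ b, kernelPow (stepProb d N) n (projHom d N v) y ≤
      ∑ ε, kernelPow (stepProb d N) n (shifted ε b) y := by
    rintro ⟨p, m⟩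
    refine kernelPow_stepProb_le_sum_boxShift n p _ v (le_trans ?_ hxy)
    have hm : ∑ i, ((m i : ℕ) : ℤ) ≤ ∑ _i : Fin d, (M : ℤ) :=
      Finset.sum_le_sum fun i _ => by have := (m i).2; omega
    have hp : ((p : ℕ) : ℤ) ≤ M := by have := p.2; omega
    simp only [Finset.sum_const, Finset.card_univ, Fintype.card_fin, nsmul_eq_mul] at hm
    linarith
  have hmass : ∀ ε, ∑ b, kernelPow (stepProb d N) n (shifted ε b) y ≤ 1 := fun ε => by
    rw [← tsum_kernelPow_stepProb_left n y, ← tsum_fintype (L := .unconditional _)]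
    exact ENNReal.tsum_comp_le_tsum_of_injective
      (injective_projHom_sub_boxShift hM ε (projHom d N v)) _
  calc ((M : ℝ≥0∞) + 1) ^ (d + 1) * kernelPow (stepProb d N) n (projHom d N v) y
      = ∑ _b : Fin (M + 1) × (Fin d → Fin (M + 1)),
          kernelPow (stepProb d N) n (projHom d N v) y := by simp [pow_succ']
    _ ≤ ∑ b, ∑ ε, kernelPow (stepProb d N) n (shifted ε b) y :=
        Finset.sum_le_sum fun b _ => hle b
    _ = ∑ ε, ∑ b, kernelPow (stepProb d N) n (shifted ε b) y := Finset.sum_comm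
    _ ≤ ∑ _ε : Fin d → ℤˣ, 1 := Finset.sum_le_sum fun ε _ => hmass ε
    _ = 2 ^ d := by simp

/-- The constant in the heat kernel bound. -/
def heatConst (d : ℕ) : ℕ := (d + 2) ^ (d + 1) * 2 ^ d

theorem pow_mul_kernelPow_stepProb_le {r : ℕ} (hr : 1 ≤ r) (hrN : r ≤ N) (n : ℕ) {x y : Cyl d N}
    (hxy : (r : ℤ) ≤ |x.2 - y.2|) :
    (r : ℝ≥0∞) ^ (d + 1) * kernelPow (stepProb d N) n x y ≤ heatConst d := by
  wlog h : y.2 ≤ x.2 generalizing x y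
  · rw [kernelPow_comm stepProb_comm]
    exact this (by rwa [abs_sub_comm]) (by omega)
  rw [abs_of_nonneg (by omega)] at hxy
  let M := r / (d + 2)
  have hM : M < N := (Nat.div_lt_self hr (by omega)).trans_le hrN
  have hMr : (d + 2) * M ≤ r := Nat.mul_div_le r (d + 2)
  have hrM : r ≤ (d + 2) * (M + 1) := (Nat.lt_mul_div_succ r (by omega)).le
  have hbox := pow_mul_kernelPow_stepProb_le_two_pow hM n (x := x) (y := y)
    (le_trans (by exact_mod_cast hMr) hxy)
  calc (r : ℝ≥0∞) ^ (d + 1) * kernelPow (stepProb d N) n x y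
      ≤ (((d + 2 : ℕ) : ℝ≥0∞) * (M + 1)) ^ (d + 1) * kernelPow (stepProb d N) n x y := by
        gcongr
        exact_mod_cast hrM
    _ = ((d + 2 : ℕ) : ℝ≥0∞) ^ (d + 1) *
          (((M : ℝ≥0∞) + 1) ^ (d + 1) * kernelPow (stepProb d N) n x y) := by
        rw [mul_pow, mul_assoc]
    _ ≤ ((d + 2 : ℕ) : ℝ≥0∞) ^ (d + 1) * 2 ^ d := by gcongr
    _ = heatConst d := by simp [heatConst]

end HeatKernel

section GreenFunction

variable {d N : ℕ} {j : ℤ}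

theorem tsum_stepProb_mul_snd (z : Cyl d N) (f : ℤ → ℝ≥0∞) :
    ∑' y, stepProb d N z y * f y.2 =
      (2 * ((d : ℝ≥0∞) + 1))⁻¹ * (2 * d * f z.2 + (f (z.2 + 1) + f (z.2 - 1))) := by
  have hcoord : ∀ (i : Fin d) (a : ℤ), (Pi.single i.castSucc a : Lat d) (Fin.last d) = 0 :=
    fun i a => by simp [(Fin.castSucc_lt_last i).ne]
  rw [stepProb_eq_stepKernel, tsum_stepKernel_mul, card_unitVecs, sum_unitVecs,
    Fin.sum_univ_castSucc]
  simp only [projHom, projE, AddMonoidHom.coe_mk, ZeroHom.coe_mk, Prod.snd_add, hcoord, add_zero,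
    Pi.single_eq_same, Finset.sum_const, Finset.card_univ, Fintype.card_fin, nsmul_eq_mul]
  push_cast
  ring_nf

/-- A function of the height whose discrete Laplacian is `-1` and which is nonnegative on `B̃_j`;
it dominates the expected exit time. -/
noncomputable def exitTimeBound (d N : ℕ) (j h : ℤ) : ℝ≥0∞ :=
  ENNReal.ofReal ((d + 1) * ((2 * N) ^ 2 - (h - j * N) ^ 2))

theorem exitTimeBound_le (h : ℤ) : exitTimeBound d N j h ≤ 4 * (d + 1) * N ^ 2 := by
  have hreal : ((d : ℝ) + 1) * ((2 * N) ^ 2 - (h - j * N) ^ 2) ≤ (4 * (d + 1) * N ^ 2 : ℕ) := by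
    push_cast
    nlinarith [mul_nonneg (by positivity : (0 : ℝ) ≤ d + 1) (sq_nonneg ((h : ℝ) - j * N))]
  refine (ENNReal.ofReal_le_ofReal hreal).trans (le_of_eq ?_)
  rw [ENNReal.ofReal_natCast]
  push_cast
  rfl

theorem one_add_tsum_stepProb_mul_exitTimeBound {z : Cyl d N} (hz : z ∈ Btl d N j) :
    1 + ∑' y, stepProb d N z y * exitTimeBound d N j y.2 = exitTimeBound d N j z.2 := by
  obtain ⟨hz1, hz2⟩ := hz
  have hlow : ((j : ℝ) - 2) * N + 1 ≤ z.2 := by exact_mod_cast hz1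
  have hupp : (z.2 : ℝ) ≤ (j + 2) * N - 1 := by exact_mod_cast hz2
  let F (a : ℝ) : ℝ := (d + 1) * ((2 * N) ^ 2 - (a - j * N) ^ 2)
  have hF : ∀ a : ℝ, ((j : ℝ) - 2) * N ≤ a → a ≤ (j + 2) * N → 0 ≤ F a := fun a h1 h2 =>
    mul_nonneg (by positivity) (by nlinarith)
  have h0 := hF z.2 (by linarith) (by linarith)
  have hup := hF (z.2 + 1) (by linarith) (by linarith)
  have hdown := hF (z.2 - 1) (by linarith) (by linarith)
  have hd : (2 * ((d : ℝ≥0∞) + 1)) = ENNReal.ofReal (2 * (d + 1)) := by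
    rw [ENNReal.ofReal_mul (by norm_num), ENNReal.ofReal_add (by positivity) (by norm_num)]
    simp
  have hd' : (2 * (d : ℝ≥0∞)) = ENNReal.ofReal (2 * d) := by
    rw [ENNReal.ofReal_mul (by norm_num)]
    simp
  rw [tsum_stepProb_mul_snd]
  unfold exitTimeBound
  push_cast
  change 1 + _ * (_ * ENNReal.ofReal (F z.2) +
    (ENNReal.ofReal (F (z.2 + 1)) + ENNReal.ofReal (F (z.2 - 1)))) = ENNReal.ofReal (F z.2)
  rw [hd, hd', ← ENNReal.ofReal_inv_of_pos (by positivity), ← ENNReal.ofReal_mul (by positivity),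
    ← ENNReal.ofReal_add hup hdown, ← ENNReal.ofReal_add (by positivity) (by positivity),
    ← ENNReal.ofReal_mul (by positivity), ← ENNReal.ofReal_one,
    ← ENNReal.ofReal_add zero_le_one (by positivity)]
  congr 1
  simp only [F]
  field_simp
  ring

/-- The Green function of simple random walk killed on leaving `B̃_j`. -/
noncomputable abbrev greenBtl (d N : ℕ) (j : ℤ) : Cyl d N → Cyl d N → ℝ≥0∞ :=
  green (killed (stepProb d N) (Btl d N j))

theorem tsum_greenBtl_le (hN : 1 ≤ N) (x : Cyl d N) :
    ∑' y, greenBtl d N j x y ≤ 4 * (d + 1) * N ^ 2 := by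
  let h (z : Cyl d N) : ℝ≥0∞ := if z ∈ Btl d N j then exitTimeBound d N j z.2 else 1
  have hh : ∀ z, 1 + ∑' y, killed (stepProb d N) (Btl d N j) z y * h y ≤ h z := by
    intro z
    by_cases hz : z ∈ Btl d N j
    · simp only [h, if_pos hz]
      rw [← one_add_tsum_stepProb_mul_exitTimeBound hz]
      refine add_le_add_right (ENNReal.tsum_le_tsum fun y => ?_) 1
      by_cases hy : y ∈ Btl d N j <;> simp [killed, hz, hy]
    · simp [h, hz, killed]
  refine (tsum_green_le hh x).trans ?_
  simp only [h]
  split_ifs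
  · exact exitTimeBound_le x.2
  · exact_mod_cast (by nlinarith [Nat.one_le_pow 2 N hN] : 1 ≤ 4 * (d + 1) * N ^ 2)

theorem killed_stepProb_comm (B : Set (Cyl d N)) (x y : Cyl d N) :
    killed (stepProb d N) B x y = killed (stepProb d N) B y x :=
  killed_comm stepProb_comm B x y

theorem tsum_greenBtl_left_le (hN : 1 ≤ N) (y : Cyl d N) :
    ∑' x, greenBtl d N j x y ≤ 4 * (d + 1) * N ^ 2 := by
  simp only [greenBtl, green_comm (killed_stepProb_comm _) _ y]
  exact tsum_greenBtl_le hN y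

theorem pow_mul_kernelPow_killed_le {r : ℕ} (hr : 1 ≤ r) (hrN : r ≤ N) (B : Set (Cyl d N)) (n : ℕ)
    {x y : Cyl d N} (hxy : (r : ℤ) ≤ |x.2 - y.2|) :
    (r : ℝ≥0∞) ^ (d + 1) * kernelPow (killed (stepProb d N) B) n x y ≤ heatConst d :=
  le_trans (by gcongr; exact kernelPow_mono (killed_le B) n x y)
    (pow_mul_kernelPow_stepProb_le hr hrN n hxy)

/-- The number of steps, in units of `N ^ 2`, after which the walk has left `B̃_j` with
probability at least `1 - 3 ^ (-(d + 1)) / 2`. -/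
def killingConst (d : ℕ) : ℕ := 8 * (d + 1) * 3 ^ (d + 1)

/-- The constant in the Green function bound. -/
def greenConst (d : ℕ) : ℕ := 3 * killingConst d * heatConst d

theorem two_mul_tsum_kernelPow_killed_le_one (hN : 1 ≤ N) (z : Cyl d N) :
    2 * 3 ^ (d + 1) * ∑' y, kernelPow (killed (stepProb d N) (Btl d N j))
      (killingConst d * N ^ 2) z y ≤ 1 := by
  have hsub : ∀ x, ∑' y, killed (stepProb d N) (Btl d N j) x y ≤ 1 := fun x =>
    (ENNReal.tsum_le_tsum (killed_le _ x)).trans_eq (tsum_stepProb x)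
  have h := (mul_tsum_kernelPow_le hsub (killingConst d * N ^ 2) z).trans (tsum_greenBtl_le hN z)
  have hc0 : (4 * ((d : ℝ≥0∞) + 1) * N ^ 2) ≠ 0 := by positivity
  have hct : (4 * ((d : ℝ≥0∞) + 1) * N ^ 2) ≠ ⊤ := by
    exact_mod_cast ENNReal.natCast_ne_top (4 * (d + 1) * N ^ 2)
  rw [← ENNReal.mul_le_mul_iff_right hc0 hct, mul_one, ← mul_assoc]
  refine le_trans (le_of_eq ?_) h
  congr 1
  simp only [killingConst]
  push_cast
  ring

-- Points `y` far from `x` are bounded by `hfar`; the others are far from `z`, where the heat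
-- kernel is small.
theorem pow_mul_tsum_kernelPow_mul_greenBtl_le {q : ℕ} (hq : 1 ≤ q) (hqN : q ≤ N) {C : ℝ≥0∞}
    {x : Cyl d N} (hfar : ∀ y : Cyl d N, (q : ℤ) ≤ |y.2 - x.2| →
      (q : ℝ≥0∞) ^ (d + 1) * greenBtl d N j y x ≤ C)
    (n : ℕ) {z : Cyl d N} (hz : 2 * (q : ℤ) ≤ |z.2 - x.2|) :
    (q : ℝ≥0∞) ^ (d + 1) * ∑' y, kernelPow (killed (stepProb d N) (Btl d N j)) n z y *
        greenBtl d N j y x ≤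
      (∑' y, kernelPow (killed (stepProb d N) (Btl d N j)) n z y) * C +
        heatConst d * (4 * (d + 1) * N ^ 2) := by
  refine le_trans ?_ (add_le_add_right
    (mul_le_mul_right (tsum_greenBtl_left_le (j := j) (hq.trans hqN) x) _) _)
  rw [← ENNReal.tsum_mul_left, ← ENNReal.tsum_mul_left, ← ENNReal.tsum_mul_right,
    ← ENNReal.tsum_add]
  refine ENNReal.tsum_le_tsum fun y => ?_
  by_cases hy : (q : ℤ) ≤ |y.2 - x.2|
  · rw [mul_left_comm]
    exact le_add_right (mul_le_mul_right (hfar y hy) _)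
  · have hzy : (q : ℤ) ≤ |z.2 - y.2| := by
      have := abs_sub_le z.2 y.2 x.2
      omega
    rw [← mul_assoc]
    exact le_add_left (mul_le_mul_left (pow_mul_kernelPow_killed_le hq hqN _ n hzy) _)

theorem greenBtl_le (hN : 1 ≤ N) (z x : Cyl d N) :
    greenBtl d N j z x ≤ greenConst d * N ^ 2 := by
  have h3 : 1 ≤ 3 ^ (d + 1) := Nat.one_le_pow _ _ (by norm_num)
  have hH : 1 ≤ heatConst d := Nat.mul_pos (by positivity) (by positivity)
  have h4 : 4 * (d + 1) ≤ greenConst d :=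
    calc 4 * (d + 1) ≤ 3 * (8 * (d + 1) * 1) * 1 := by omega
      _ ≤ greenConst d := by unfold greenConst killingConst; gcongr
  refine (ENNReal.le_tsum x).trans ((tsum_greenBtl_le hN z).trans ?_)
  gcongr
  exact_mod_cast h4

theorem pow_mul_greenBtl_le {r : ℕ} (hr : 1 ≤ r) (hrN : r ≤ N) {x z : Cyl d N}
    (hz : (r : ℤ) ≤ |z.2 - x.2|) :
    (r : ℝ≥0∞) ^ (d + 1) * greenBtl d N j z x ≤ greenConst d * N ^ 2 := by
  have hN : 1 ≤ N := hr.trans hrN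
  induction r using Nat.strong_induction_on generalizing z with
  | _ r ih =>
    rcases hr.eq_or_lt with rfl | hr2
    · simpa using greenBtl_le hN z x
    let q := r / 2
    let p := kernelPow (killed (stepProb d N) (Btl d N j))
    let L := killingConst d * N ^ 2
    have hstep := pow_mul_tsum_kernelPow_mul_greenBtl_le (j := j) (q := q) (x := x) (by omega)
      (by omega) (fun y hy => ih q (by omega) (by omega) (by omega) hy) L (z := z) (by omega)
    have hshort : (r : ℝ≥0∞) ^ (d + 1) * ∑ n ∈ Finset.range L, p n z x ≤ L * heatConst d := by
      rw [Finset.mul_sum]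
      refine (Finset.sum_le_sum fun n _ =>
        pow_mul_kernelPow_killed_le hr hrN (Btl d N j) n hz).trans_eq ?_
      simp
    have hrq : (r : ℝ≥0∞) ≤ 3 * q := by exact_mod_cast (by omega : r ≤ 3 * q)
    have hmass := two_mul_tsum_kernelPow_killed_le_one (j := j) hN z
    rw [← ENNReal.mul_le_mul_iff_right two_ne_zero ENNReal.ofNat_ne_top]
    calc 2 * ((r : ℝ≥0∞) ^ (d + 1) * greenBtl d N j z x)
        = 2 * ((r : ℝ≥0∞) ^ (d + 1) * ∑ n ∈ Finset.range L, p n z x) +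
            2 * ((r : ℝ≥0∞) ^ (d + 1) * ∑' y, p L z y * greenBtl d N j y x) := by
          rw [greenBtl, green_eq_sum_add L, mul_add, mul_add]
      _ ≤ 2 * (L * heatConst d) +
            2 * ((3 * q) ^ (d + 1) * ∑' y, p L z y * greenBtl d N j y x) := by gcongr
      _ = 2 * (L * heatConst d) + 2 * 3 ^ (d + 1) *
            (q ^ (d + 1) * ∑' y, p L z y * greenBtl d N j y x) := by ring
      _ ≤ 2 * (L * heatConst d) + 2 * 3 ^ (d + 1) * ((∑' y, p L z y) * (greenConst d * N ^ 2) +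
            heatConst d * (4 * (d + 1) * N ^ 2)) := by gcongr
      _ = 2 * 3 ^ (d + 1) * (∑' y, p L z y) * (greenConst d * N ^ 2) +
            greenConst d * N ^ 2 := by
          simp only [L, greenConst, killingConst]
          push_cast
          ring
      _ ≤ 1 * (greenConst d * N ^ 2) + greenConst d * N ^ 2 := by gcongr
      _ = 2 * (greenConst d * N ^ 2) := by ring

theorem Cblk_subset_Bblk : Cblk d N j ⊆ Bblk d N j := by
  intro x hx
  constructor
  · exact_mod_cast (by nlinarith [hx.1, N.cast_nonneg (α := ℝ)] : ((j : ℝ) - 1) * N ≤ x.2)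
  · exact_mod_cast (by nlinarith [hx.2, N.cast_nonneg (α := ℝ)] : (x.2 : ℝ) ≤ (j + 1) * N)

theorem Bblk_subset_Btl (hN : 1 ≤ N) : Bblk d N j ⊆ Btl d N j := by
  intro x hx
  zify at hN
  exact ⟨by linarith [hx.1], by linarith [hx.2]⟩

theorem le_four_mul_abs_sub_of_mem_Cblk {x z : Cyl d N} (hx : x ∈ Cblk d N j)
    (hz : z.2 = (j - 1) * N ∨ z.2 = (j + 1) * N) : (N : ℤ) ≤ 4 * |z.2 - x.2| := by
  obtain ⟨hx1, hx2⟩ := hx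
  have hreal : (N : ℝ) ≤ 4 * |(z.2 : ℝ) - x.2| := by
    rcases hz with h | h
    · have hz' : (z.2 : ℝ) = (j - 1) * N := by exact_mod_cast h
      linarith [neg_abs_le ((z.2 : ℝ) - x.2)]
    · have hz' : (z.2 : ℝ) = (j + 1) * N := by exact_mod_cast h
      linarith [le_abs_self ((z.2 : ℝ) - x.2)]
  exact_mod_cast hreal

theorem pow_mul_greenBtl_Cblk_le (hd : 1 ≤ d) (hN : 1 ≤ N) {x z : Cyl d N} (hx : x ∈ Cblk d N j)
    (hz : z.2 = (j - 1) * N ∨ z.2 = (j + 1) * N) :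
    (N : ℝ≥0∞) ^ (d - 1) * greenBtl d N j z x ≤ 4 ^ (d + 1) * greenConst d := by
  let r := (N + 3) / 4
  have hdist := le_four_mul_abs_sub_of_mem_Cblk hx hz
  have hr4 : (N : ℝ≥0∞) ≤ 4 * r := by exact_mod_cast (by omega : N ≤ 4 * r)
  have hG := pow_mul_greenBtl_le (j := j) (r := r) (by omega) (by omega) (x := x) (z := z)
    (by omega)
  have hN0 : (N : ℝ≥0∞) ^ 2 ≠ 0 := by positivity
  have hNt : (N : ℝ≥0∞) ^ 2 ≠ ⊤ := ENNReal.pow_ne_top (ENNReal.natCast_ne_top N)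
  rw [← ENNReal.mul_le_mul_iff_right hN0 hNt]
  calc (N : ℝ≥0∞) ^ 2 * (N ^ (d - 1) * greenBtl d N j z x)
      = N ^ (d + 1) * greenBtl d N j z x := by
        rw [← mul_assoc, ← pow_add, show 2 + (d - 1) = d + 1 by omega]
    _ ≤ (4 * r) ^ (d + 1) * greenBtl d N j z x := by gcongr
    _ = 4 ^ (d + 1) * (r ^ (d + 1) * greenBtl d N j z x) := by ring
    _ ≤ 4 ^ (d + 1) * (greenConst d * N ^ 2) := by gcongr
    _ = N ^ 2 * (4 ^ (d + 1) * greenConst d) := by ring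

end GreenFunction

section MarkovFamily

variable {X : Type*}

/-- The path that starts at `x` and then follows `ω`. -/
def pathCons (x : X) (ω : ℕ → X) : ℕ → X
  | 0 => x
  | n + 1 => ω n

/-- The canonical time shift `θ_n` on paths. -/
def shift (n : ℕ) (ω : ℕ → X) : ℕ → X := fun k => ω (k + n)

theorem shift_shift (m n : ℕ) (ω : ℕ → X) : shift n (shift m ω) = shift (m + n) ω :=
  funext fun k => congrArg ω (by omega)

variable [MeasurableSpace X]

theorem measurable_pathCons (x : X) : Measurable (pathCons x) :=
  measurable_pi_iff.2 fun n => match n with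
    | 0 => measurable_const
    | n + 1 => measurable_pi_apply n

theorem measurable_shift (n : ℕ) : Measurable (shift (X := X) n) :=
  measurable_pi_lambda _ fun _ => measurable_pi_apply _

/-- `P` is the family of laws, indexed by the starting point, of the Markov chain on `X` with
transition probabilities `K`. -/
structure IsMarkovFamily (K : X → X → ℝ≥0∞) (P : X → Measure (ℕ → X)) : Prop where
  isProbabilityMeasure : ∀ x, IsProbabilityMeasure (P x)
  apply_initialSegment : ∀ (x : X) (n : ℕ) (γ : ℕ → X), P x {ω | ∀ i ≤ n, ω i = γ i} =
    (if γ 0 = x then 1 else 0) * ∏ i ∈ Finset.range n, K (γ i) (γ (i + 1))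

variable [Countable X] [MeasurableSingletonClass X]

theorem measurable_of_dependsOn_Iic {Y : Type*} [MeasurableSpace Y] [Nonempty Y]
    {f : (ℕ → X) → Y} {n : ℕ} (hf : DependsOn f (Set.Iic n)) : Measurable f := by
  obtain ⟨g, rfl⟩ := dependsOn_iff_exists_comp.1 hf
  exact (measurable_of_countable g).comp (measurable_pi_lambda _ fun i => measurable_pi_apply _)

theorem measurableSet_of_dependsOn_Iic {S : Set (ℕ → X)} {n : ℕ}
    (hS : DependsOn (· ∈ S) (Set.Iic n)) : MeasurableSet S :=
  measurableSet_setOfPred.2 (measurable_of_dependsOn_Iic hS)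

theorem measure_ext_of_initialSegments {μ ν : Measure (ℕ → X)} [IsFiniteMeasure μ] (a : ℕ)
    (h : ∀ n ≥ a, ∀ γ : ℕ → X, μ {ω | ∀ i ≤ n, ω i = γ i} = ν {ω | ∀ i ≤ n, ω i = γ i}) :
    μ = ν := by
  have hμ : IsProjectiveLimit μ fun I : Finset ℕ => μ.map I.restrict := fun I => rfl
  have hfam : IsProjectiveMeasureFamily fun I : Finset ℕ => μ.map I.restrict := fun I J hJI => by
    rw [Measure.map_map (Finset.measurable_restrict₂ hJI) I.measurable_restrict]
    rfl
  refine hμ.unique ((isProjectiveLimit_nat_iff' hfam ν a).2 fun n hn => ?_)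
  refine Measure.ext_of_singleton fun η => ?_
  have hpre : Preorder.frestrictLe (π := fun _ => X) n ⁻¹' {η} =
      {ω : ℕ → X | ∀ i ≤ n, ω i = η ⟨min i n, Finset.mem_Iic.2 (min_le_right i n)⟩} := by
    ext ω
    simp +contextual [funext_iff]
  rw [Measure.map_apply (Preorder.measurable_frestrictLe n) (measurableSet_singleton η),
    Measure.map_apply (Finset.measurable_restrict _) (measurableSet_singleton η)]
  exact hpre ▸ (h n hn _).symm

variable {K : X → X → ℝ≥0∞} {P : X → Measure (ℕ → X)}

namespace IsMarkovFamily

theorem eq_sum_map_pathCons (hP : IsMarkovFamily K P) (x : X) :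
    P x = Measure.sum fun y => K x y • (P y).map (pathCons x) := by
  have := hP.isProbabilityMeasure
  refine measure_ext_of_initialSegments 1 fun n hn γ => ?_
  obtain ⟨n, rfl⟩ := Nat.exists_eq_add_of_le' hn
  have hpre : pathCons x ⁻¹' {ω | ∀ i ≤ n + 1, ω i = γ i} =
      {ω | γ 0 = x ∧ ∀ i ≤ n, ω i = γ (i + 1)} := by
    ext ω
    refine ⟨fun h => ⟨(h 0 n.succ.zero_le).symm, fun i hi => h (i + 1) (by omega)⟩, ?_⟩
    rintro ⟨h0, h⟩ (_ | i) hi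
    exacts [h0.symm, h i (by omega)]
  have hmeas : MeasurableSet {ω : ℕ → X | ∀ i ≤ n + 1, ω i = γ i} :=
    measurableSet_of_dependsOn_Iic (n := n + 1) fun ω ω' h =>
      propext (forall₂_congr fun i hi => by rw [h i hi])
  simp only [Measure.sum_apply _ hmeas, Measure.smul_apply, smul_eq_mul,
    Measure.map_apply (measurable_pathCons x) hmeas, hpre, hP.apply_initialSegment x]
  by_cases h0 : γ 0 = x
  · have hterm : ∀ y, K x y * P y {ω | ∀ i ≤ n, ω i = γ (i + 1)} =
        if y = γ 1 then K x y * ∏ i ∈ Finset.range n, K (γ (i + 1)) (γ (i + 1 + 1)) else 0 := by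
      intro y
      simp [hP.apply_initialSegment y n fun i => γ (i + 1), eq_comm]
    simp [h0, hterm, Finset.prod_range_succ', mul_comm]
  · simp [h0]

theorem ae_iff (hP : IsMarkovFamily K P) {x : X} {p : (ℕ → X) → Prop}
    (hp : MeasurableSet {ω | p ω}) :
    (∀ᵐ ω ∂P x, p ω) ↔ ∀ y, K x y ≠ 0 → ∀ᵐ ω ∂P y, p (pathCons x ω) := by
  rw [hP.eq_sum_map_pathCons x, Measure.ae_sum_iff]
  refine forall_congr' fun y => ?_
  by_cases hy : K x y = 0
  · simp [hy]
  · simp only [ne_eq, hy, not_false_eq_true, true_imp_iff,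
      Measure.ae_ennreal_smul_measure_iff hy, ae_map_iff (measurable_pathCons x).aemeasurable hp]

theorem lintegral_eq (hP : IsMarkovFamily K P) (x : X) {F : (ℕ → X) → ℝ≥0∞} (hF : Measurable F) :
    ∫⁻ ω, F ω ∂P x = ∑' y, K x y * ∫⁻ ω, F (pathCons x ω) ∂P y := by
  conv_lhs => rw [hP.eq_sum_map_pathCons x]
  simp only [lintegral_sum_measure, lintegral_smul_measure, smul_eq_mul,
    lintegral_map hF (measurable_pathCons x)]

theorem measure_eq (hP : IsMarkovFamily K P) (x : X) {S : Set (ℕ → X)} (hS : MeasurableSet S) :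
    P x S = ∑' y, K x y * P y (pathCons x ⁻¹' S) := by
  conv_lhs => rw [hP.eq_sum_map_pathCons x]
  simp only [Measure.sum_apply _ hS, Measure.smul_apply, smul_eq_mul,
    Measure.map_apply (measurable_pathCons x) hS]

theorem ae_apply_zero_eq (hP : IsMarkovFamily K P) (x : X) : ∀ᵐ ω ∂P x, ω 0 = x := by
  have := hP.isProbabilityMeasure
  have hmeas : MeasurableSet {ω : ℕ → X | ω 0 = x} :=
    measurableSet_eq_fun (measurable_pi_apply 0) measurable_const
  refine (mem_ae_iff_prob_eq_one hmeas).2 ?_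
  simpa using hP.apply_initialSegment x 0 fun _ => x

theorem ae_step_ne_zero (hP : IsMarkovFamily K P) (x : X) :
    ∀ᵐ ω ∂P x, ∀ n, K (ω n) (ω (n + 1)) ≠ 0 := by
  rw [ae_all_iff]
  have hmeas : ∀ n, MeasurableSet {ω : ℕ → X | K (ω n) (ω (n + 1)) ≠ 0} := fun n =>
    measurableSet_of_dependsOn_Iic (n := n + 1) fun ω ω' h => by
      simp only [Set.mem_ofPred_eq, h n (Set.mem_Iic.2 n.le_succ), h (n + 1) Set.self_mem_Iic]
  intro n
  induction n generalizing x with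
  | zero =>
    refine (hP.ae_iff (hmeas 0)).2 fun y hy => ?_
    filter_upwards [hP.ae_apply_zero_eq y] with ω hω
    rwa [pathCons, pathCons, hω]
  | succ n ih => exact (hP.ae_iff (hmeas (n + 1))).2 fun y _ => ih y

theorem lintegral_mul_comp_shift (hP : IsMarkovFamily K P) {n : ℕ} {f G : (ℕ → X) → ℝ≥0∞}
    (hf : DependsOn f (Set.Iic n)) (hG : Measurable G) (x : X) :
    ∫⁻ ω, f ω * G (shift n ω) ∂P x = ∫⁻ ω, f ω * ∫⁻ ω', G ω' ∂P (ω n) ∂P x := by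
  have := hP.isProbabilityMeasure
  induction n generalizing f x with
  | zero =>
    have hfx : ∀ᵐ ω ∂P x, f ω = f (fun _ => x) := by
      filter_upwards [hP.ae_apply_zero_eq x] with ω hω
      exact hf fun i hi => by rw [Nat.le_zero.1 hi, hω]
    calc ∫⁻ ω, f ω * G (shift 0 ω) ∂P x
        = ∫⁻ ω, f (fun _ => x) * G ω ∂P x :=
          lintegral_congr_ae (hfx.mono fun ω hω => by simp only [hω]; rfl)
      _ = ∫⁻ _, f (fun _ => x) * ∫⁻ ω', G ω' ∂P x ∂P x := by simp [lintegral_const_mul _ hG]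
      _ = ∫⁻ ω, f ω * ∫⁻ ω', G ω' ∂P (ω 0) ∂P x :=
          lintegral_congr_ae ((hfx.and (hP.ae_apply_zero_eq x)).mono fun ω hω => by
            simp only [hω.1, hω.2])
  | succ n ih =>
    have hmean : Measurable fun ω : ℕ → X => ∫⁻ ω', G ω' ∂P (ω (n + 1)) :=
      (measurable_of_countable fun y => ∫⁻ ω', G ω' ∂P y).comp (measurable_pi_apply (n + 1))
    have hfm := measurable_of_dependsOn_Iic hf
    refine (hP.lintegral_eq x (hfm.mul (hG.comp (measurable_shift _)))).trans
      (Eq.trans ?_ (hP.lintegral_eq x (hfm.mul hmean)).symm)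
    refine tsum_congr fun y => congrArg (K x y * ·) (ih (f := fun ω => f (pathCons x ω)) ?_ y)
    intro ω ω' h
    refine hf fun i hi => ?_
    cases i with
    | zero => rfl
    | succ i => exact h i (Nat.succ_le_succ_iff.1 hi)

theorem measure_eq_and_forall_mem (hP : IsMarkovFamily K P) {B : Set X} {x : X} (hx : x ∈ B)
    (n : ℕ) (z : X) :
    P z {ω | ω n = x ∧ ∀ i ≤ n, ω i ∈ B} = kernelPow (killed K B) n z x := by
  have := hP.isProbabilityMeasure
  have hmeas : ∀ n, MeasurableSet {ω : ℕ → X | ω n = x ∧ ∀ i ≤ n, ω i ∈ B} := fun n =>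
    measurableSet_of_dependsOn_Iic (n := n) fun ω ω' h => propext <| and_congr
      (by rw [h n Set.self_mem_Iic]) (forall₂_congr fun i hi => by rw [h i hi])
  induction n generalizing z with
  | zero =>
    have hae : {ω : ℕ → X | ω 0 = x ∧ ∀ i ≤ 0, ω i ∈ B} =ᵐ[P z] {_ω | z = x} := by
      filter_upwards [hP.ae_apply_zero_eq z] with ω hω
      refine propext ⟨fun h => hω ▸ h.1, fun h => ?_⟩
      have hωx : ω 0 = x := hω.trans h
      exact ⟨hωx, fun i hi => by rwa [Nat.le_zero.1 hi, hωx]⟩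
    rw [measure_congr hae, kernelPow]
    split_ifs with h <;> simp [h]
  | succ n ih =>
    have hpre : ∀ y, P y (pathCons z ⁻¹' {ω | ω (n + 1) = x ∧ ∀ i ≤ n + 1, ω i ∈ B}) =
        if z ∈ B then kernelPow (killed K B) n y x else 0 := by
      intro y
      split_ifs with hz
      · rw [← ih y]
        congr 1
        ext ω
        exact and_congr_right fun _ => ⟨fun h i hi => h (i + 1) (Nat.succ_le_succ hi),
          fun h i => i.casesOn (fun _ => hz) fun i hi => h i (Nat.succ_le_succ_iff.1 hi)⟩
      · exact measure_mono_null (fun ω h => hz (h.2 0 (Nat.zero_le _))) measure_empty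
    rw [hP.measure_eq z (hmeas (n + 1)), kernelPow]
    refine tsum_congr fun y => ?_
    rw [hpre, killed]
    by_cases hy : y ∈ B
    · by_cases hz : z ∈ B <;> simp [hy, hz]
    · have hpow : kernelPow (killed K B) n y x = 0 := by
        have hyx : y ≠ x := fun h => hy (h ▸ hx)
        cases n <;> simp [kernelPow, killed, hy, hyx]
      simp [hy, hpow]

end IsMarkovFamily

end MarkovFamily

section PathTimes

variable {X : Type*} {U B : Set X} {ω : ℕ → X} {t : ℕ∞} {m n : ℕ}

theorem entT_lt_iff : entT U ω < t ↔ ∃ i : ℕ, (i : ℕ∞) < t ∧ ω i ∈ U := by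
  simp only [entT, sInf_lt_iff, Set.mem_ofPred_eq]
  constructor
  · rintro ⟨_, ⟨i, hi, rfl⟩, h⟩
    exact ⟨i, h, hi⟩
  · rintro ⟨i, h, hi⟩
    exact ⟨i, ⟨i, hi, rfl⟩, h⟩

theorem entT_anti {V : Set X} (h : U ⊆ V) : entT V ω ≤ entT U ω :=
  sInf_le_sInf fun _ ⟨n, hn, ht⟩ => ⟨n, h hn, ht⟩

theorem entT_eq_coe_iff : entT U ω = n ↔ ω n ∈ U ∧ ∀ i < n, ω i ∉ U := by
  have hlt : ∀ m : ℕ, entT U ω < m ↔ ∃ i < m, ω i ∈ U := fun m => by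
    simp only [entT_lt_iff, Nat.cast_lt]
  have hsucc : entT U ω ≤ n ↔ entT U ω < (n + 1 : ℕ) := by
    rw [Nat.cast_succ, ENat.lt_add_one_iff (ENat.natCast_ne_top n)]
  rw [le_antisymm_iff, hsucc, hlt, ← not_lt, hlt]
  push Not
  constructor
  · rintro ⟨⟨i, hi, hiU⟩, h⟩
    obtain rfl : i = n := (Nat.lt_succ_iff.1 hi).antisymm (le_of_not_gt fun hin => h i hin hiU)
    exact ⟨hiU, h⟩
  · exact fun h => ⟨⟨n, n.lt_succ_self, h.1⟩, h.2⟩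

theorem coe_lt_exitT_iff : (n : ℕ∞) < exitT B ω ↔ ∀ i ≤ n, ω i ∈ B := by
  rw [← not_le, ← ENat.lt_add_one_iff (ENat.natCast_ne_top n), exitT, entT_lt_iff]
  simp only [← Nat.cast_succ, Nat.cast_lt, Nat.lt_succ_iff, Set.mem_compl_iff]
  push Not
  rfl

theorem exitT_eq_add (h : (n : ℕ∞) ≤ exitT B ω) : exitT B ω = n + exitT B (shift n ω) := by
  induction hT : exitT B ω using ENat.recTopCoe with
  | top =>
    have hshift : exitT B (shift n ω) = ⊤ := by
      refine ENat.eq_top_iff_forall_gt.2 fun m => coe_lt_exitT_iff.2 fun i _ => ?_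
      exact coe_lt_exitT_iff.1 (hT ▸ ENat.natCast_lt_top (i + n)) (i + n) le_rfl
    rw [hshift, add_top]
  | coe m =>
    obtain ⟨k, rfl⟩ := Nat.exists_eq_add_of_le (Nat.cast_le.1 (hT ▸ h))
    obtain ⟨hk, hlt⟩ := entT_eq_coe_iff.1 hT
    have hshift : exitT B (shift n ω) = k :=
      entT_eq_coe_iff.2 ⟨show ω (k + n) ∈ Bᶜ from add_comm n k ▸ hk,
        fun i hi => hlt (i + n) (by omega)⟩
    rw [hshift, Nat.cast_add]

@[simp]
theorem after_top (f : (ℕ → X) → ℕ∞) : after ⊤ f ω = ⊤ := rfl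

@[simp]
theorem after_coe (f : (ℕ → X) → ℕ∞) : after (m : ℕ∞) f ω = m + f (shift m ω) := rfl

theorem after_eq_coe_iff {f : (ℕ → X) → ℕ∞} :
    after t f ω = n ↔ ∃ m k : ℕ, t = m ∧ f (shift m ω) = k ∧ m + k = n := by
  induction t using ENat.recTopCoe with
  | top => simp
  | coe m =>
    simp only [after_coe, Nat.cast_inj, exists_and_left, exists_eq_left']
    induction f (shift m ω) using ENat.recTopCoe with
    | top => simp
    | coe k => simp only [← Nat.cast_add, Nat.cast_inj, exists_eq_left']

theorem after_assoc (f g : (ℕ → X) → ℕ∞) :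
    after (after t f ω) g ω = after t (fun ω => after (f ω) g ω) ω := by
  induction t using ENat.recTopCoe with
  | top => rfl
  | coe m =>
    simp only [after_coe]
    induction f (shift m ω) using ENat.recTopCoe with
    | top => simp
    | coe k => rw [← Nat.cast_add, after_coe, after_coe, shift_shift, Nat.cast_add, add_assoc]

/-- A time that is a stopping time of the path, in the form of Galmarino's test: whether it has
the finite value `n` is decided by the first `n` steps. -/
def IsPathStoppingTime (τ : (ℕ → X) → ℕ∞) : Prop :=
  ∀ ⦃n : ℕ⦄ ⦃ω ω' : ℕ → X⦄, τ ω = n → (∀ i ≤ n, ω' i = ω i) → τ ω' = n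

theorem isPathStoppingTime_entT (U : Set X) : IsPathStoppingTime (entT U) := by
  intro n ω ω' h heq
  obtain ⟨hn, hlt⟩ := entT_eq_coe_iff.1 h
  exact entT_eq_coe_iff.2 ⟨(heq n le_rfl).symm ▸ hn, fun i hi => (heq i hi.le).symm ▸ hlt i hi⟩

theorem isPathStoppingTime_exitT (B : Set X) : IsPathStoppingTime (exitT B) :=
  isPathStoppingTime_entT Bᶜ

theorem IsPathStoppingTime.after {τ σ : (ℕ → X) → ℕ∞} (hτ : IsPathStoppingTime τ)
    (hσ : IsPathStoppingTime σ) : IsPathStoppingTime fun ω => after (τ ω) σ ω := by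
  intro n ω ω' h heq
  obtain ⟨m, k, hm, hk, rfl⟩ := after_eq_coe_iff.1 h
  exact after_eq_coe_iff.2 ⟨m, k, hτ hm fun i hi => heq i (hi.trans (Nat.le_add_right m k)),
    hσ hk fun i hi => heq (i + m) (by omega), rfl⟩

theorem IsPathStoppingTime.measurable [MeasurableSpace X] [Countable X]
    [MeasurableSingletonClass X] {τ : (ℕ → X) → ℕ∞} (hτ : IsPathStoppingTime τ) :
    Measurable τ :=
  ENat.measurable_iff.2 fun n => measurableSet_of_dependsOn_Iic (n := n) fun _ _ h =>
    propext ⟨fun hω => hτ hω fun i hi => (h i hi).symm, fun hω => hτ hω fun i hi => h i hi⟩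

/-- `D_1`: the first time the path leaves `B'` after its first visit to `B`. -/
noncomputable def excursionEnd (B B' : Set X) (ω : ℕ → X) : ℕ∞ :=
  after (entT B ω) (exitT B') ω

/-- `D_k`: the time of the `k`-th departure from `B'`, a departure being counted only after a
return to `B`. -/
noncomputable def departure (B B' : Set X) : ℕ → (ℕ → X) → ℕ∞
  | 0, _ => 0
  | k + 1, ω => after (departure B B' k ω) (excursionEnd B B') ω

theorem departure_succ' (B B' : Set X) (k : ℕ) (ω : ℕ → X) :
    departure B B' (k + 1) ω = after (excursionEnd B B' ω) (departure B B' k) ω := by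
  induction k generalizing ω with
  | zero =>
    change after (0 : ℕ) (excursionEnd B B') ω = after (excursionEnd B B' ω) (fun _ => 0) ω
    rw [after_coe]
    induction h : excursionEnd B B' ω using ENat.recTopCoe with
    | top => exact (zero_add _).trans h
    | coe m => exact (zero_add _).trans h
  | succ k ih =>
    rw [departure, ih, after_assoc]
    rfl

theorem isPathStoppingTime_excursionEnd (B B' : Set X) :
    IsPathStoppingTime (excursionEnd B B') :=
  (isPathStoppingTime_entT B).after (isPathStoppingTime_exitT B')

theorem isPathStoppingTime_departure (B B' : Set X) (k : ℕ) :
    IsPathStoppingTime (departure B B' k) := by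
  induction k with
  | zero => exact fun _ _ _ h _ => h
  | succ k ih => exact ih.after (isPathStoppingTime_excursionEnd B B')

theorem apply_notMem_of_excursionEnd_eq {B' : Set X} (h : excursionEnd B B' ω = n) :
    ω n ∉ B' := by
  obtain ⟨m, k, -, hk, rfl⟩ := after_eq_coe_iff.1 h
  rw [add_comm]
  exact (entT_eq_coe_iff.1 hk).1

end PathTimes

section StrongMarkov

variable {X : Type*} [MeasurableSpace X] [Countable X] [MeasurableSingletonClass X]
  {K : X → X → ℝ≥0∞} {P : X → Measure (ℕ → X)}

theorem IsMarkovFamily.setLIntegral_mul_comp_shift (hP : IsMarkovFamily K P)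
    {τ : (ℕ → X) → ℕ∞} (hτ : IsPathStoppingTime τ) {f G : (ℕ → X) → ℝ≥0∞}
    (hfτ : ∀ ⦃n : ℕ⦄ ⦃ω ω' : ℕ → X⦄, τ ω = n → (∀ i ≤ n, ω' i = ω i) → f ω' = f ω)
    (hG : Measurable G) (n : ℕ) (z : X) :
    ∫⁻ ω in τ ⁻¹' {(n : ℕ∞)}, f ω * G (shift n ω) ∂P z =
      ∫⁻ ω in τ ⁻¹' {(n : ℕ∞)}, f ω * ∫⁻ ω', G ω' ∂P (ω n) ∂P z := by
  have hmeas : MeasurableSet (τ ⁻¹' {(n : ℕ∞)}) := hτ.measurable (measurableSet_singleton _)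
  have hind : DependsOn (fun ω => if τ ω = n then f ω else 0) (Set.Iic n) := by
    intro ω ω' h
    have hiff : τ ω = n ↔ τ ω' = n :=
      ⟨fun hω => hτ hω fun i hi => (h i hi).symm, fun hω' => hτ hω' h⟩
    by_cases hω : τ ω = n
    · simp only [hω, hiff.1 hω, if_true, hfτ hω fun i hi => (h i hi).symm]
    · simp only [hω, mt hiff.2 hω, if_false]
  have hmul : ∀ H : (ℕ → X) → ℝ≥0∞, ∫⁻ ω in τ ⁻¹' {(n : ℕ∞)}, f ω * H ω ∂P z =
      ∫⁻ ω, (if τ ω = n then f ω else 0) * H ω ∂P z := fun H => by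
    rw [← lintegral_indicator hmeas]
    simp only [Set.indicator_apply, Set.mem_preimage, Set.mem_singleton_iff, ite_mul, zero_mul]
  rw [hmul, hmul]
  exact hP.lintegral_mul_comp_shift hind hG z

theorem IsMarkovFamily.lintegral_le_mul_of_stopping (hP : IsMarkovFamily K P) {z : X}
    {τ : (ℕ → X) → ℕ∞} (hτ : IsPathStoppingTime τ) {F f G : (ℕ → X) → ℝ≥0∞} {M : ℝ≥0∞}
    (hf : Measurable f)
    (hfτ : ∀ ⦃n : ℕ⦄ ⦃ω ω' : ℕ → X⦄, τ ω = n → (∀ i ≤ n, ω' i = ω i) → f ω' = f ω)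
    (hG : Measurable G) (hFtop : ∀ ω, τ ω = ⊤ → F ω ≤ f ω * M)
    (hFn : ∀ ω, ∀ n : ℕ, τ ω = n → F ω ≤ f ω * G (shift n ω))
    (hM : ∀ᵐ ω ∂P z, ∀ n : ℕ, τ ω = n → ∫⁻ ω', G ω' ∂P (ω n) ≤ M) :
    ∫⁻ ω, F ω ∂P z ≤ (∫⁻ ω, f ω ∂P z) * M := by
  have hmeas : ∀ t, MeasurableSet (τ ⁻¹' {t}) := fun t => hτ.measurable (measurableSet_singleton t)
  have hfiber : ∀ H : (ℕ → X) → ℝ≥0∞,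
      ∫⁻ ω, H ω ∂P z = ∑' t, ∫⁻ ω in τ ⁻¹' {t}, H ω ∂P z := fun H => by
    rw [← lintegral_iUnion hmeas fun s t hst => (Set.disjoint_singleton.2 hst).preimage τ,
      ← Set.preimage_iUnion, Set.iUnion_of_singleton, Set.preimage_univ, setLIntegral_univ]
  rw [← lintegral_mul_const M hf, hfiber F, hfiber]
  refine ENNReal.tsum_le_tsum fun t => ?_
  induction t using ENat.recTopCoe with
  | top => exact setLIntegral_mono' (hmeas ⊤) fun ω hω => hFtop ω hω
  | coe n =>
    calc ∫⁻ ω in τ ⁻¹' {(n : ℕ∞)}, F ω ∂P z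
        ≤ ∫⁻ ω in τ ⁻¹' {(n : ℕ∞)}, f ω * G (shift n ω) ∂P z :=
          setLIntegral_mono' (hmeas n) fun ω hω => hFn ω n hω
      _ = ∫⁻ ω in τ ⁻¹' {(n : ℕ∞)}, f ω * ∫⁻ ω', G ω' ∂P (ω n) ∂P z :=
          hP.setLIntegral_mul_comp_shift hτ hfτ hG n z
      _ ≤ ∫⁻ ω in τ ⁻¹' {(n : ℕ∞)}, f ω * M ∂P z :=
          setLIntegral_mono_ae' (hmeas n) (hM.mono fun ω hω hn => mul_le_mul_right (hω n hn) _)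

theorem IsMarkovFamily.measure_entT_lt_exitT_le (hP : IsMarkovFamily K P) {A : Finset X} {B : Set X}
    (hAB : ↑A ⊆ B) (z : X) :
    P z {ω | entT ↑A ω < exitT B ω} ≤ ∑ x ∈ A, green (killed K B) z x := by
  have hsub : {ω : ℕ → X | entT ↑A ω < exitT B ω} ⊆
      ⋃ x ∈ A, ⋃ n, {ω | ω n = x ∧ ∀ i ≤ n, ω i ∈ B} := by
    intro ω hω
    obtain ⟨n, hn, hA⟩ := entT_lt_iff.1 hω
    exact Set.mem_biUnion hA (Set.mem_iUnion.2 ⟨n, rfl, coe_lt_exitT_iff.1 hn⟩)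
  refine (measure_mono hsub).trans ((measure_biUnion_finset_le A _).trans ?_)
  refine Finset.sum_le_sum fun x hx => (measure_iUnion_le _).trans_eq ?_
  exact tsum_congr fun n => hP.measure_eq_and_forall_mem (hAB hx) n z

end StrongMarkov

section HitWeight

variable {X : Type*} {lam : ℝ} {A : Finset X} {ω ω' : ℕ → X} {t : ℕ∞} {m n : ℕ}

/-- The weight `exp(λ Σ_{x∈A} 1{H_x < t})`. -/
noncomputable def hitWeight (lam : ℝ) (A : Finset X) (t : ℕ∞) (ω : ℕ → X) : ℝ≥0∞ :=
  ENNReal.ofReal (Real.exp (lam * ∑ x ∈ A, if entT {x} ω < t then (1 : ℝ) else 0))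

theorem hitWeight_eq_one (h : ∀ x ∈ A, t ≤ entT {x} ω) : hitWeight lam A t ω = 1 := by
  rw [hitWeight, Finset.sum_eq_zero fun x hx => if_neg (h x hx).not_gt]
  simp

theorem hitWeight_congr (h : ∀ i < n, ω' i = ω i) : hitWeight lam A n ω' = hitWeight lam A n ω := by
  have hiff : ∀ x, entT {x} ω' < n ↔ entT {x} ω < n := fun x => by
    simp only [entT_lt_iff, Nat.cast_lt]
    exact exists_congr fun i => and_congr_right fun hi => by rw [h i hi]
  simp only [hitWeight, hiff]

theorem one_le_hitWeight (hlam : 0 ≤ lam) : 1 ≤ hitWeight lam A t ω := by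
  refine ENNReal.one_le_ofReal.2 (Real.one_le_exp (mul_nonneg hlam ?_))
  positivity

theorem hitWeight_le (hlam : 0 ≤ lam) :
    hitWeight lam A t ω ≤ ENNReal.ofReal (Real.exp (lam * A.card)) := by
  refine ENNReal.ofReal_le_ofReal (Real.exp_le_exp.2 (mul_le_mul_of_nonneg_left ?_ hlam))
  refine (Finset.sum_le_card_nsmul A _ 1 fun x _ => ?_).trans_eq (by simp)
  split_ifs <;> simp

theorem hitWeight_add_le (hlam : 0 ≤ lam) :
    hitWeight lam A (m + t) ω ≤ hitWeight lam A m ω * hitWeight lam A t (shift m ω) := by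
  rw [hitWeight, hitWeight, hitWeight, ← ENNReal.ofReal_mul (Real.exp_nonneg _), ← Real.exp_add,
    ← mul_add, ← Finset.sum_add_distrib]
  refine ENNReal.ofReal_le_ofReal (Real.exp_le_exp.2 (mul_le_mul_of_nonneg_left ?_ hlam))
  refine Finset.sum_le_sum fun x _ => ?_
  have hor : entT {x} ω < m + t → entT {x} ω < m ∨ entT {x} (shift m ω) < t := by
    simp only [entT_lt_iff]
    rintro ⟨i, hi, hx⟩
    rcases lt_or_ge i m with him | him
    · exact Or.inl ⟨i, Nat.cast_lt.2 him, hx⟩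
    · obtain ⟨k, rfl⟩ := Nat.exists_eq_add_of_le him
      refine Or.inr ⟨k, ?_, show ω (k + m) ∈ {x} from add_comm m k ▸ hx⟩
      rw [Nat.cast_add] at hi
      exact lt_of_add_lt_add_left hi
  by_cases h : entT {x} ω < m + t
  · rw [if_pos h]
    rcases hor h with h | h <;> rw [if_pos h]
    · exact le_add_of_nonneg_right (by positivity)
    · exact le_add_of_nonneg_left (by positivity)
  · rw [if_neg h]
    positivity

theorem hitWeight_add_le_of_notMem (hlam : 0 ≤ lam) (h : ∀ i < m, ω i ∉ A) :
    hitWeight lam A (m + t) ω ≤ hitWeight lam A t (shift m ω) := by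
  refine (hitWeight_add_le hlam).trans_eq ?_
  rw [hitWeight_eq_one fun x hx => not_lt.1 fun hlt => ?_, one_mul]
  obtain ⟨i, hi, rfl⟩ := entT_lt_iff.1 hlt
  exact h i (Nat.cast_lt.1 hi) hx

theorem measurableSet_lt_of_measurable {Ω : Type*} [MeasurableSpace Ω] {τ σ : Ω → ℕ∞}
    (hτ : Measurable τ) (hσ : Measurable σ) : MeasurableSet {ω | τ ω < σ ω} :=
  (hτ.prodMk hσ) (MeasurableSet.of_discrete (s := {p : ℕ∞ × ℕ∞ | p.1 < p.2}))

theorem measurable_hitWeight [MeasurableSpace X] [Countable X] [MeasurableSingletonClass X]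
    {τ : (ℕ → X) → ℕ∞} (hτ : Measurable τ) (lam : ℝ) (A : Finset X) :
    Measurable fun ω => hitWeight lam A (τ ω) ω := by
  refine (Real.measurable_exp.comp (measurable_const.mul ?_)).ennreal_ofReal
  refine Finset.measurable_fun_sum A fun x _ => Measurable.ite ?_ measurable_const measurable_const
  exact measurableSet_lt_of_measurable (isPathStoppingTime_entT {x}).measurable hτ

theorem lintegral_hitWeight_eq_one_add [MeasurableSpace X] {μ : Measure (ℕ → X)}
    [IsProbabilityMeasure μ] (hlam : 0 ≤ lam) {τ : (ℕ → X) → ℕ∞} :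
    ∫⁻ ω, hitWeight lam A (τ ω) ω ∂μ = 1 + ∫⁻ ω, hitWeight lam A (τ ω) ω - 1 ∂μ := by
  calc ∫⁻ ω, hitWeight lam A (τ ω) ω ∂μ
      = ∫⁻ ω, 1 + (hitWeight lam A (τ ω) ω - 1) ∂μ :=
        lintegral_congr fun ω => (add_tsub_cancel_of_le (one_le_hitWeight hlam)).symm
    _ = 1 + ∫⁻ ω, hitWeight lam A (τ ω) ω - 1 ∂μ := by
        rw [lintegral_add_left measurable_const, lintegral_const, measure_univ, one_mul]

theorem integral_exp_eq_toReal_lintegral_hitWeight [MeasurableSpace X] [Countable X]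
    [MeasurableSingletonClass X] (μ : Measure (ℕ → X)) {τ : (ℕ → X) → ℕ∞} (hτ : Measurable τ)
    (lam : ℝ) (A : Finset X) :
    ∫ ω, Real.exp (lam * ∑ x ∈ A, if entT {x} ω < τ ω then (1 : ℝ) else 0) ∂μ =
      (∫⁻ ω, hitWeight lam A (τ ω) ω ∂μ).toReal := by
  rw [← integral_toReal (measurable_hitWeight hτ lam A).aemeasurable
    (ae_of_all _ fun _ => ENNReal.ofReal_lt_top)]
  exact integral_congr_ae (ae_of_all _ fun _ => (ENNReal.toReal_ofReal (Real.exp_nonneg _)).symm)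

/-- `E_z[exp(λ Σ_{x∈A} 1{H_x < T_B})] - 1`, the excess over `1` of the moment generating function
of the number of points of `A` visited before leaving `B`. -/
noncomputable def hitExcess [MeasurableSpace X] (P : X → Measure (ℕ → X)) (lam : ℝ) (A : Finset X)
    (B : Set X) (z : X) : ℝ≥0∞ :=
  ∫⁻ ω, hitWeight lam A (exitT B ω) ω - 1 ∂P z

theorem hitExcess_le [MeasurableSpace X] {P : X → Measure (ℕ → X)} {z : X}
    [IsProbabilityMeasure (P z)] (hlam : 0 ≤ lam) (B : Set X) :
    hitExcess P lam A B z ≤ ENNReal.ofReal (Real.exp (lam * A.card)) :=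
  calc hitExcess P lam A B z
      ≤ ∫⁻ _, ENNReal.ofReal (Real.exp (lam * A.card)) ∂P z :=
        lintegral_mono fun _ => tsub_le_self.trans (hitWeight_le hlam)
    _ = ENNReal.ofReal (Real.exp (lam * A.card)) := by simp

end HitWeight

section Excursions

variable {X : Type*} [MeasurableSpace X] [Countable X] [MeasurableSingletonClass X]
  {K : X → X → ℝ≥0∞} {P : X → Measure (ℕ → X)} {lam : ℝ} {A : Finset X} {B B' : Set X}
  {b σ : ℝ≥0∞} {z : X}

theorem measurable_hitWeight_exitT_sub_one (lam : ℝ) (A : Finset X) (B : Set X) :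
    Measurable fun ω : ℕ → X => hitWeight lam A (exitT B ω) ω - 1 :=
  (measurable_hitWeight (isPathStoppingTime_exitT B).measurable lam A).sub_const 1

theorem IsMarkovFamily.hitExcess_le_mul (hP : IsMarkovFamily K P) (hlam : 0 ≤ lam) (hAB : ↑A ⊆ B)
    (hσ : ∀ x ∈ A, hitExcess P lam A B x ≤ σ) (z : X) :
    hitExcess P lam A B z ≤ (∑ x ∈ A, green (killed K B) z x) * σ := by
  set S : Set (ℕ → X) := {ω | entT ↑A ω < exitT B ω}
  have hS : MeasurableSet S := measurableSet_lt_of_measurable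
    (isPathStoppingTime_entT _).measurable (isPathStoppingTime_exitT B).measurable
  have hnot : ∀ ω ∉ S, hitWeight lam A (exitT B ω) ω = 1 := fun ω hω =>
    hitWeight_eq_one fun x hx => (not_lt.1 hω).trans (entT_anti (Set.singleton_subset_iff.2 hx))
  calc hitExcess P lam A B z
      ≤ (∫⁻ ω, S.indicator 1 ω ∂P z) * σ := by
        refine hP.lintegral_le_mul_of_stopping (isPathStoppingTime_entT _)
          (measurable_one.indicator hS) (fun n ω ω' hn heq => ?_)
          (measurable_hitWeight_exitT_sub_one lam A B) (fun ω htop => ?_) (fun ω n hn => ?_)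
          (Eventually.of_forall fun ω n hn => hσ _ (entT_eq_coe_iff.1 hn).1)
        · have hiff : ω' ∈ S ↔ ω ∈ S := by
            simp only [S, Set.mem_ofPred_eq, hn, isPathStoppingTime_entT _ hn heq,
              coe_lt_exitT_iff]
            exact forall₂_congr fun i hi => by rw [heq i hi]
          simp only [Set.indicator_apply, hiff, Pi.one_apply]
        · rw [hnot ω fun hω : entT ↑A ω < _ => not_top_lt (htop ▸ hω), tsub_self]
          exact zero_le
        · by_cases hω : ω ∈ S
          · have hexit : exitT B ω = n + exitT B (shift n ω) := exitT_eq_add (hn ▸ hω.le)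
            rw [Set.indicator_of_mem hω, Pi.one_apply, one_mul, hexit]
            exact tsub_le_tsub_right
              (hitWeight_add_le_of_notMem hlam (entT_eq_coe_iff.1 hn).2) 1
          · rw [hnot ω hω, tsub_self]
            exact zero_le
    _ ≤ (∑ x ∈ A, green (killed K B) z x) * σ := by
        rw [lintegral_indicator_one hS]
        exact mul_le_mul_left (hP.measure_entT_lt_exitT_le hAB z) σ

theorem IsMarkovFamily.lintegral_hitWeight_excursionEnd_le (hP : IsMarkovFamily K P)
    (hlam : 0 ≤ lam) (hAB : ↑A ⊆ B)
    (hb : ∀ y ∈ B, (y = z ∨ ∃ w ∉ B, K w y ≠ 0) → hitExcess P lam A B' y ≤ b) :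
    ∫⁻ ω, hitWeight lam A (excursionEnd B B' ω) ω ∂P z ≤ 1 + b := by
  have := hP.isProbabilityMeasure z
  have hexcess : ∫⁻ ω, hitWeight lam A (excursionEnd B B' ω) ω - 1 ∂P z ≤ (∫⁻ _, 1 ∂P z) * b := by
    refine hP.lintegral_le_mul_of_stopping (isPathStoppingTime_entT B) measurable_const
      (fun _ _ _ _ _ => rfl) (measurable_hitWeight_exitT_sub_one lam A B') (fun ω htop => ?_)
      (fun ω n hn => ?_) ?_
    · rw [hitWeight_eq_one fun x hx => ?_, tsub_self]
      · exact zero_le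
      · rw [top_le_iff.1 (htop.ge.trans (entT_anti (Set.singleton_subset_iff.2 (hAB hx))))]
        exact le_top
    · rw [excursionEnd, hn, after_coe, one_mul]
      exact tsub_le_tsub_right (hitWeight_add_le_of_notMem hlam fun i hi hA =>
        (entT_eq_coe_iff.1 hn).2 i hi (hAB hA)) 1
    · filter_upwards [hP.ae_apply_zero_eq z, hP.ae_step_ne_zero z] with ω hzero hstep n hn
      obtain ⟨hB, hout⟩ := entT_eq_coe_iff.1 hn
      refine hb _ hB ?_
      cases n with
      | zero => exact Or.inl hzero
      | succ n => exact Or.inr ⟨ω n, hout n n.lt_succ_self, hstep n⟩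
  rw [lintegral_const, measure_univ, one_mul, one_mul] at hexcess
  rw [lintegral_hitWeight_eq_one_add hlam]
  exact add_le_add_right hexcess 1

theorem IsMarkovFamily.lintegral_hitWeight_departure_succ_le (hP : IsMarkovFamily K P)
    (hlam : 0 ≤ lam) (k : ℕ) {M : ℝ≥0∞} (hM : 1 ≤ M)
    (hk : ∀ y ∉ B', ∫⁻ ω, hitWeight lam A (departure B B' k ω) ω ∂P y ≤ M) :
    ∫⁻ ω, hitWeight lam A (departure B B' (k + 1) ω) ω ∂P z ≤
      (∫⁻ ω, hitWeight lam A (excursionEnd B B' ω) ω ∂P z) * M := by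
  have hstopping := isPathStoppingTime_excursionEnd B B'
  refine hP.lintegral_le_mul_of_stopping hstopping (measurable_hitWeight hstopping.measurable lam A)
    (fun n ω ω' hn heq => ?_)
    (measurable_hitWeight (isPathStoppingTime_departure B B' k).measurable lam A)
    (fun ω htop => ?_) (fun ω n hn => ?_)
    (Eventually.of_forall fun ω n hn => hk _ (apply_notMem_of_excursionEnd_eq hn))
  · rw [hn, hstopping hn heq, hitWeight_congr fun i hi => heq i hi.le]
  · rw [departure_succ', htop, after_top]
    exact le_mul_of_one_le_right' hM
  · rw [departure_succ', hn, after_coe]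
    exact hitWeight_add_le hlam

theorem IsMarkovFamily.lintegral_hitWeight_departure_le_pow (hP : IsMarkovFamily K P)
    (hlam : 0 ≤ lam) (hAB : ↑A ⊆ B) (hBB' : B ⊆ B')
    (hb : ∀ y ∈ B, (∃ w ∉ B, K w y ≠ 0) → hitExcess P lam A B' y ≤ b) (k : ℕ) (hz : z ∉ B') :
    ∫⁻ ω, hitWeight lam A (departure B B' k ω) ω ∂P z ≤ (1 + b) ^ k := by
  induction k generalizing z with
  | zero =>
    have := hP.isProbabilityMeasure z
    have hone : ∀ ω : ℕ → X, hitWeight lam A (departure B B' 0 ω) ω = 1 := fun ω =>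
      hitWeight_eq_one fun _ _ => zero_le
    simp [hone]
  | succ k ih =>
    rw [pow_succ']
    refine (hP.lintegral_hitWeight_departure_succ_le hlam k
      (one_le_pow_of_one_le' le_self_add k) fun y hy => ih hy).trans (mul_le_mul_left ?_ _)
    refine hP.lintegral_hitWeight_excursionEnd_le hlam hAB fun y hy => ?_
    rintro (rfl | hw)
    exacts [absurd (hBB' hy) hz, hb y hy hw]

theorem IsMarkovFamily.lintegral_hitWeight_departure_succ_le_mul_pow (hP : IsMarkovFamily K P)
    (hlam : 0 ≤ lam) (hAB : ↑A ⊆ B) (hBB' : B ⊆ B')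
    (hb : ∀ y ∈ B, (∃ w ∉ B, K w y ≠ 0) → hitExcess P lam A B' y ≤ b) (k : ℕ) (z : X) :
    ∫⁻ ω, hitWeight lam A (departure B B' (k + 1) ω) ω ∂P z ≤
      (1 + (b + hitExcess P lam A B' z)) * (1 + b) ^ k := by
  refine (hP.lintegral_hitWeight_departure_succ_le hlam k (one_le_pow_of_one_le' le_self_add k)
    fun y hy => hP.lintegral_hitWeight_departure_le_pow hlam hAB hBB' hb k hy).trans
    (mul_le_mul_left ?_ _)
  refine hP.lintegral_hitWeight_excursionEnd_le hlam hAB fun y hy => ?_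
  rintro (rfl | hw)
  exacts [le_add_self, (hb y hy hw).trans le_self_add]

end Excursions

section Cylinder

variable {d N : ℕ} {Pl : Cyl d N → Measure (ℕ → Cyl d N)} {j : ℤ} {lam : ℝ}
  {A : Finset (Cyl d N)}

instance (N : ℕ) : DiscreteMeasurableSpace (ZMod N) := ⟨fun _ => trivial⟩

theorem IsCylRW.isMarkovFamily (h : IsCylRW d N Pl) : IsMarkovFamily (stepProb d N) Pl :=
  ⟨h.1, fun x n γ => by convert h.2 x n γ⟩

theorem DD_eq_departure (j : ℤ) (k : ℕ) :
    DD d N j k = departure (Bblk d N j) (Btl d N j) k := by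
  induction k with
  | zero => rfl
  | succ k ih =>
    funext ω
    rw [DD, ih]
    rfl

theorem snd_eq_of_stepProb_ne_zero {w y : Cyl d N} (h : stepProb d N w y ≠ 0) :
    y.2 = w.2 ∨ y.2 = w.2 + 1 ∨ y.2 = w.2 - 1 := by
  by_contra hy
  have hsum := tsum_stepProb_mul_snd w
    fun a => if a = w.2 ∨ a = w.2 + 1 ∨ a = w.2 - 1 then 0 else 1
  simp only [true_or, or_true, if_true, add_zero, mul_zero, ENNReal.tsum_eq_zero] at hsum
  exact h (by simpa only [if_neg hy, mul_one] using hsum y)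

theorem snd_eq_of_entrance_Bblk {w y : Cyl d N} (hy : y ∈ Bblk d N j) (hw : w ∉ Bblk d N j)
    (h : stepProb d N w y ≠ 0) : y.2 = (j - 1) * N ∨ y.2 = (j + 1) * N := by
  have hstep := snd_eq_of_stepProb_ne_zero h
  simp only [Bblk, Set.mem_ofPred_eq, not_and_or, not_le] at hy hw
  omega

theorem phi_eq_one_add_toReal_hitExcess (hP : IsCylRW d N Pl) (hlam : 0 ≤ lam) (z : Cyl d N) :
    phi d N Pl j lam A z = 1 + (hitExcess Pl lam A (Btl d N j) z).toReal := by
  have := hP.1 z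
  rw [phi, integral_exp_eq_toReal_lintegral_hitWeight _ (isPathStoppingTime_exitT _).measurable,
    lintegral_hitWeight_eq_one_add hlam, ← hitExcess, ENNReal.toReal_add ENNReal.one_ne_top
      (ne_top_of_le_ne_top ENNReal.ofReal_ne_top (hitExcess_le hlam _)), ENNReal.toReal_one]

theorem phi_le_phiSup (hP : IsCylRW d N Pl) (hlam : 0 ≤ lam) (z : Cyl d N) :
    phi d N Pl j lam A z ≤ phiSup d N Pl j lam A := by
  have := hP.1
  refine le_ciSup ⟨1 + Real.exp (lam * A.card), Set.forall_mem_range.2 fun y => ?_⟩ z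
  rw [phi_eq_one_add_toReal_hitExcess hP hlam]
  exact add_le_add_right
    (ENNReal.toReal_le_of_le_ofReal (Real.exp_nonneg _) (hitExcess_le hlam _)) 1

theorem one_le_phiSup (hP : IsCylRW d N Pl) (hlam : 0 ≤ lam) : 1 ≤ phiSup d N Pl j lam A := by
  refine le_trans ?_ (phi_le_phiSup hP hlam 0)
  rw [phi_eq_one_add_toReal_hitExcess hP hlam]
  exact le_add_of_nonneg_right ENNReal.toReal_nonneg

theorem hitExcess_le_ofReal_phiSup_sub_one (hP : IsCylRW d N Pl) (hlam : 0 ≤ lam) (z : Cyl d N) :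
    hitExcess Pl lam A (Btl d N j) z ≤ ENNReal.ofReal (phiSup d N Pl j lam A - 1) := by
  have := hP.1 z
  refine ENNReal.le_ofReal_iff_toReal_le
    (ne_top_of_le_ne_top ENNReal.ofReal_ne_top (hitExcess_le hlam _))
    (sub_nonneg.2 (one_le_phiSup hP hlam)) |>.2 (le_sub_iff_add_le'.2 ?_)
  exact (phi_eq_one_add_toReal_hitExcess hP hlam z).symm.trans_le (phi_le_phiSup hP hlam z)

theorem tsum_indicator_Bblk (hN : 1 ≤ N) :
    ∑' z : Cyl d N, (if z ∈ Bblk d N 0 then 1 else 0 : ℝ≥0∞) = (N : ℝ≥0∞) ^ d * (2 * N + 1) := by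
  have : NeZero N := ⟨by omega⟩
  have hmem : ∀ (a : Fin d → ZMod N) (b : ℤ), (a, b) ∈ Bblk d N 0 ↔ b ∈ Finset.Icc (-N : ℤ) N :=
    fun a b => by simp [Bblk]
  have hheight : ∑' b : ℤ, (if b ∈ Finset.Icc (-N : ℤ) N then 1 else 0 : ℝ≥0∞) = 2 * N + 1 := by
    have hcard : ((N : ℤ) + 1 - -N).toNat = 2 * N + 1 := by omega
    rw [tsum_eq_sum (s := Finset.Icc (-N : ℤ) N) fun b hb => if_neg hb, Finset.sum_ite_mem,
      Finset.inter_self, Finset.sum_const, Int.card_Icc, hcard, nsmul_one]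
    push_cast
    rfl
  rw [ENNReal.tsum_prod']
  simp only [hmem, hheight, tsum_fintype, Finset.sum_const, Finset.card_univ, Fintype.card_fun,
    ZMod.card, Fintype.card_fin, nsmul_eq_mul, Nat.cast_pow]

theorem lintegral_lawP_le (hN : 1 ≤ N) {F : (ℕ → Cyl d N) → ℝ≥0∞} {a : ℝ≥0∞}
    {g : Cyl d N → ℝ≥0∞} (h : ∀ z, ∫⁻ ω, F ω ∂Pl z ≤ a + g z) :
    ∫⁻ ω, F ω ∂lawP d N Pl ≤ a + ((N : ℝ≥0∞) ^ d * (2 * N + 1))⁻¹ * ∑' z, g z := by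
  have hcard : (N : ℝ≥0∞) ^ d * (2 * N + 1) ≠ 0 ∧ (N : ℝ≥0∞) ^ d * (2 * N + 1) ≠ ⊤ := by
    norm_cast
    exact ⟨by positivity, ENNReal.natCast_ne_top _⟩
  have hterm : ∀ z, ∫⁻ ω, F ω ∂(if z ∈ Bblk d N 0 then Pl z else 0) ≤
      (if z ∈ Bblk d N 0 then 1 else 0) * a + g z := fun z => by
    split_ifs
    · simpa only [one_mul] using h z
    · simp
  rw [lawP, lintegral_smul_measure, lintegral_sum_measure, smul_eq_mul]
  calc ((N : ℝ≥0∞) ^ d * (2 * N + 1))⁻¹ *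
        ∑' z, ∫⁻ ω, F ω ∂(if z ∈ Bblk d N 0 then Pl z else 0)
      ≤ ((N : ℝ≥0∞) ^ d * (2 * N + 1))⁻¹ * ∑' z, ((if z ∈ Bblk d N 0 then 1 else 0) * a + g z) :=
        mul_le_mul_right (ENNReal.tsum_le_tsum hterm) _
    _ = a + ((N : ℝ≥0∞) ^ d * (2 * N + 1))⁻¹ * ∑' z, g z := by
        rw [ENNReal.tsum_add, ENNReal.tsum_mul_right, tsum_indicator_Bblk hN, mul_add,
          ← mul_assoc, ENNReal.inv_mul_cancel hcard.1 hcard.2, one_mul]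

/-- A constant for the bound on the exponential moment of one excursion; its two summands come
from the excursions that enter `B_j` from outside and from the starting point of the walk. -/
def hitConst (d : ℕ) : ℕ := 4 ^ (d + 1) * greenConst d + 4 * (d + 1)

theorem hitExcess_entrance_le (hd : 1 ≤ d) (hN : 1 ≤ N) (hP : IsCylRW d N Pl) (hlam : 0 ≤ lam)
    (hA : ↑A ⊆ Cblk d N j) {σ : ℝ≥0∞} (hσ : ∀ z, hitExcess Pl lam A (Btl d N j) z ≤ σ)
    {z : Cyl d N} (hz : z.2 = (j - 1) * N ∨ z.2 = (j + 1) * N) :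
    hitExcess Pl lam A (Btl d N j) z ≤
      4 ^ (d + 1) * greenConst d * (A.card * σ / (N : ℝ≥0∞) ^ (d - 1)) := by
  have hAB : ↑A ⊆ Btl d N j := hA.trans (Cblk_subset_Bblk.trans (Bblk_subset_Btl hN))
  have hgreen : ∀ x ∈ A, greenBtl d N j z x ≤
      4 ^ (d + 1) * greenConst d / (N : ℝ≥0∞) ^ (d - 1) := fun x hx => by
    refine (ENNReal.le_div_iff_mul_le (Or.inl ?_) (Or.inl (by finiteness))).2 ?_
    · positivity
    · rw [mul_comm]
      exact pow_mul_greenBtl_Cblk_le hd hN (hA hx) hz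
  calc hitExcess Pl lam A (Btl d N j) z
      ≤ (∑ x ∈ A, greenBtl d N j z x) * σ :=
        hP.isMarkovFamily.hitExcess_le_mul hlam hAB (fun x _ => hσ x) z
    _ ≤ A.card * (4 ^ (d + 1) * greenConst d / (N : ℝ≥0∞) ^ (d - 1)) * σ := by
        rw [← nsmul_eq_mul]
        exact mul_le_mul_left (Finset.sum_le_card_nsmul A _ _ hgreen) σ
    _ = 4 ^ (d + 1) * greenConst d * (A.card * σ / (N : ℝ≥0∞) ^ (d - 1)) := by
        simp only [div_eq_mul_inv]
        ring

theorem average_hitExcess_le (hd : 1 ≤ d) (hN : 1 ≤ N) (hP : IsCylRW d N Pl) (hlam : 0 ≤ lam)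
    (hA : ↑A ⊆ Cblk d N j) {σ : ℝ≥0∞} (hσ : ∀ z, hitExcess Pl lam A (Btl d N j) z ≤ σ) :
    ((N : ℝ≥0∞) ^ d * (2 * N + 1))⁻¹ * ∑' z, hitExcess Pl lam A (Btl d N j) z ≤
      4 * (d + 1) * (A.card * σ / (N : ℝ≥0∞) ^ (d - 1)) := by
  have hAB : ↑A ⊆ Btl d N j := hA.trans (Cblk_subset_Bblk.trans (Bblk_subset_Btl hN))
  have hsum : ∑' z, hitExcess Pl lam A (Btl d N j) z ≤ A.card * (4 * (d + 1) * N ^ 2) * σ :=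
    calc ∑' z, hitExcess Pl lam A (Btl d N j) z
        ≤ ∑' z, (∑ x ∈ A, greenBtl d N j z x) * σ := ENNReal.tsum_le_tsum fun z =>
          hP.isMarkovFamily.hitExcess_le_mul hlam hAB (fun x _ => hσ x) z
      _ = (∑ x ∈ A, ∑' z, greenBtl d N j z x) * σ := by
          rw [ENNReal.tsum_mul_right, Summable.tsum_finsetSum fun _ _ => ENNReal.summable]
      _ ≤ A.card * (4 * (d + 1) * N ^ 2) * σ := by
          rw [← nsmul_eq_mul]
          exact mul_le_mul_left
            (Finset.sum_le_card_nsmul A _ _ fun x _ => tsum_greenBtl_left_le hN x) σ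
  have hvol : (N : ℝ≥0∞) ^ (d - 1) * N ^ 2 ≤ (N : ℝ≥0∞) ^ d * (2 * N + 1) := by
    obtain ⟨d, rfl⟩ := Nat.exists_eq_add_of_le' hd
    norm_cast
    rw [Nat.add_sub_cancel, pow_succ N d, mul_assoc]
    exact Nat.mul_le_mul_left _ (by nlinarith)
  calc ((N : ℝ≥0∞) ^ d * (2 * N + 1))⁻¹ * ∑' z, hitExcess Pl lam A (Btl d N j) z
      ≤ ((N : ℝ≥0∞) ^ (d - 1) * N ^ 2)⁻¹ * (A.card * (4 * (d + 1) * N ^ 2) * σ) :=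
        mul_le_mul' (ENNReal.inv_le_inv.2 hvol) hsum
    _ = 4 * (d + 1) * (A.card * σ / (N : ℝ≥0∞) ^ (d - 1)) * ((N ^ 2 : ℝ≥0∞)⁻¹ * N ^ 2) := by
        rw [ENNReal.mul_inv (Or.inl (by positivity)) (Or.inl (by finiteness)), div_eq_mul_inv]
        ring
    _ = 4 * (d + 1) * (A.card * σ / (N : ℝ≥0∞) ^ (d - 1)) := by
        rw [ENNReal.inv_mul_cancel (by positivity) (by finiteness), mul_one]

theorem lintegral_hitWeight_DD_le_pow (hd : 1 ≤ d) (hN : 1 ≤ N) (hP : IsCylRW d N Pl)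
    (hlam : 0 ≤ lam) (hA : ↑A ⊆ Cblk d N j) {σ : ℝ≥0∞}
    (hσ : ∀ z, hitExcess Pl lam A (Btl d N j) z ≤ σ) (k : ℕ) :
    ∫⁻ ω, hitWeight lam A (DD d N j k ω) ω ∂lawP d N Pl ≤
      (1 + hitConst d * (A.card * σ / (N : ℝ≥0∞) ^ (d - 1))) ^ k := by
  set r : ℝ≥0∞ := A.card * σ / (N : ℝ≥0∞) ^ (d - 1)
  set b : ℝ≥0∞ := 4 ^ (d + 1) * greenConst d * r
  rw [DD_eq_departure]
  cases k with
  | zero =>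
    have hone : ∀ ω, hitWeight lam A (departure (Bblk d N j) (Btl d N j) 0 ω) ω = 1 := fun ω =>
      hitWeight_eq_one fun _ _ => zero_le
    have := hP.1
    simpa [hone] using lintegral_lawP_le (Pl := Pl) (F := fun _ => 1) (a := 1) (g := 0) hN
      fun z => by simp
  | succ k =>
    have hexc : ∀ z, ∫⁻ ω, hitWeight lam A (departure (Bblk d N j) (Btl d N j) (k + 1) ω) ω ∂Pl z ≤
        (1 + b) ^ (k + 1) + hitExcess Pl lam A (Btl d N j) z * (1 + b) ^ k := fun z => by
      refine (hP.isMarkovFamily.lintegral_hitWeight_departure_succ_le_mul_pow hlam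
        (hA.trans Cblk_subset_Bblk) (Bblk_subset_Btl hN) (b := b) ?_ k z).trans_eq (by ring)
      rintro y hy ⟨w, hw, hwy⟩
      exact hitExcess_entrance_le hd hN hP hlam hA hσ (snd_eq_of_entrance_Bblk hy hw hwy)
    have hsplit : b + 4 * (d + 1) * r = hitConst d * r := by
      rw [hitConst]
      push_cast
      ring
    calc ∫⁻ ω, hitWeight lam A (departure (Bblk d N j) (Btl d N j) (k + 1) ω) ω ∂lawP d N Pl
        ≤ (1 + b) ^ (k + 1) + ((N : ℝ≥0∞) ^ d * (2 * N + 1))⁻¹ *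
            ∑' z, hitExcess Pl lam A (Btl d N j) z * (1 + b) ^ k := lintegral_lawP_le hN hexc
      _ ≤ (1 + b) ^ (k + 1) + 4 * (d + 1) * r * (1 + b) ^ k := by
          rw [ENNReal.tsum_mul_right, ← mul_assoc]
          exact add_le_add_right
            (mul_le_mul_left (average_hitExcess_le hd hN hP hlam hA hσ) _) _
      _ = (1 + hitConst d * r) * (1 + b) ^ k := by
          rw [← hsplit]
          ring
      _ ≤ (1 + hitConst d * r) ^ (k + 1) := by
          rw [pow_succ', ← hsplit]
          gcongr
          exact le_self_add

theorem one_add_ofReal_pow_le_ofReal_exp {x : ℝ} (hx : 0 ≤ x) (k : ℕ) :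
    (1 + ENNReal.ofReal x) ^ k ≤ ENNReal.ofReal (Real.exp (k * x)) := by
  rw [← ENNReal.ofReal_one, ← ENNReal.ofReal_add zero_le_one hx,
    ← ENNReal.ofReal_pow (by positivity), Real.exp_nat_mul]
  exact ENNReal.ofReal_le_ofReal
    (pow_le_pow_left₀ (by positivity) (add_comm x 1 ▸ Real.add_one_le_exp x) k)

theorem integral_exp_DD_le (hd : 1 ≤ d) (hN : 1 ≤ N) (hP : IsCylRW d N Pl) (hlam : 0 ≤ lam)
    (hA : ↑A ⊆ Cblk d N j) (k : ℕ) :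
    ∫ ω, Real.exp (lam * ∑ x ∈ A, if entT {x} ω < DD d N j k ω then (1 : ℝ) else 0)
        ∂lawP d N Pl ≤
      Real.exp (k * (hitConst d * (A.card * (phiSup d N Pl j lam A - 1) /
        (N : ℝ) ^ (d - 1)))) := by
  have hs := sub_nonneg.2 (one_le_phiSup (j := j) (A := A) hP hlam)
  have hmeas : Measurable (DD d N j k) := by
    rw [DD_eq_departure]
    exact (isPathStoppingTime_departure _ _ _).measurable
  rw [integral_exp_eq_toReal_lintegral_hitWeight _ hmeas]
  refine ENNReal.toReal_le_of_le_ofReal (Real.exp_nonneg _) ?_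
  refine le_trans ?_ (one_add_ofReal_pow_le_ofReal_exp (by positivity) k)
  rw [ENNReal.ofReal_mul (by positivity), ENNReal.ofReal_div_of_pos (by positivity),
    ENNReal.ofReal_mul (by positivity), ENNReal.ofReal_pow (by positivity)]
  simp only [ENNReal.ofReal_natCast]
  exact lintegral_hitWeight_DD_le_pow hd hN hP hlam hA
    (hitExcess_le_ofReal_phiSup_sub_one hP hlam) k

end Cylinder

theorem statement_15_general (d : ℕ) (hd : 1 ≤ d) :
    ∃ c : ℝ, 0 < c ∧
      ∀ lam : ℝ, 0 ≤ lam → ∀ N : ℕ, 1 ≤ N → ∀ u : ℝ, 0 ≤ u →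
      ∀ Pl : Cyl d N → Measure (ℕ → Cyl d N), IsCylRW d N Pl →
      ∀ j : ℤ, ∀ A : Finset (Cyl d N), (↑A : Set (Cyl d N)) ⊆ Cblk d N j →
        (∫ ω, Real.exp (lam * ∑ x ∈ A,
            if entT {x} ω < DD d N j ⌊u * (N : ℝ) ^ (d - 1)⌋₊ ω then (1 : ℝ) else 0)
          ∂(lawP d N Pl))
          ≤ Real.exp (c * u * A.card * (phiSup d N Pl j lam A - 1)) := by
  refine ⟨hitConst d, Nat.cast_pos.2 (by rw [hitConst]; positivity),
    fun lam hlam N hN u hu Pl hP j A hA => ?_⟩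
  refine (integral_exp_DD_le hd hN hP hlam hA _).trans (Real.exp_le_exp.2 ?_)
  set s : ℝ := phiSup d N Pl j lam A - 1
  have hs : 0 ≤ s := sub_nonneg.2 (one_le_phiSup hP hlam)
  calc ⌊u * (N : ℝ) ^ (d - 1)⌋₊ * (hitConst d * (A.card * s / (N : ℝ) ^ (d - 1)))
      ≤ u * (N : ℝ) ^ (d - 1) * (hitConst d * (A.card * s / (N : ℝ) ^ (d - 1))) :=
        mul_le_mul_of_nonneg_right (Nat.floor_le (by positivity)) (by positivity)
    _ = hitConst d * u * A.card * s := by field_simp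

/-- **(1.21).** For `d ≥ 3` there is a constant `c` depending only on `d` such that for
every `λ > 0`, `N ≥ 2`, `u > 0` with `u N^{d-1} ≥ 1`, `j ∈ ℤ` and nonempty `A ⊆ C_j`,
`E[exp(λ Σ_{x∈A} 1{H_x < D^j_{uN^{d-1}}})] ≤ exp(c u |A| (‖φ_j‖_∞ - 1))`. -/
theorem statement_15 (d : ℕ) (hd : 3 ≤ d) :
    ∃ c : ℝ, 0 < c ∧
      ∀ lam : ℝ, 0 < lam → ∀ N : ℕ, 2 ≤ N →
      ∀ u : ℝ, 0 < u → 1 ≤ u * (N : ℝ) ^ (d - 1) →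
      ∀ Pl : Cyl d N → Measure (ℕ → Cyl d N), IsCylRW d N Pl →
      ∀ j : ℤ, ∀ A : Finset (Cyl d N), A.Nonempty → (↑A : Set (Cyl d N)) ⊆ Cblk d N j →
        (∫ ω, Real.exp (lam * ∑ x ∈ A,
            if entT {x} ω < DD d N j ⌊u * (N : ℝ) ^ (d - 1)⌋₊ ω then (1 : ℝ) else 0)
          ∂(lawP d N Pl))
          ≤ Real.exp (c * u * A.card * (phiSup d N Pl j lam A - 1)) := by
  obtain ⟨c, hc, h⟩ := statement_15_general d (by omega)
  exact ⟨c, hc, fun lam hlam N hN u hu _ Pl hP j A _ hA =>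
    h lam hlam.le N (by omega) u hu.le Pl hP j A hA⟩

end DiscCyl
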